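/- arXiv:1712.04016 — 3 statements merged into one kernel-verified Lean document; each statement's English description precedes it below -/
import Mathlib

section
/- Let Q be a commutative ring, let P₁, …, P_s be prime ideals of Q, let J be an ideal of Q and x an element of Q such that the ideal J + (x) is not contained in the union P₁ ∪ P₂ ∪ … ∪ P_s. Then there exists an element v ∈ J such that v + x ∉ P₁ ∪ P₂ ∪ … ∪ P_s. -/
/-!
Call `P i` *bad* if it contains `x`; then it does not contain `J`. Ordinary prime avoidance gives
`v ∈ J` outside every bad prime and inside every `P j` that is contained in no bad prime. Modulo a
bad prime, `v + x` equals `v`, which is nonzero; so `v + x` also avoids every `P j` contained in a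
bad prime. Modulo any other `P j`, `v + x` equals `x`, which is nonzero because `P j` is not bad.
-/

section PrimeAvoidance

variable {R ι : Type*} [CommRing R] {P : ι → Ideal R} {J : Ideal R}

theorem exists_mem_forall_notMem_of_forall_not_le {s : Finset ι}
    (hP : ∀ i ∈ s, (P i).IsPrime) (hJ : ∀ i ∈ s, ¬ J ≤ P i) :
    ∃ v ∈ J, ∀ i ∈ s, v ∉ P i := by
  obtain rfl | ⟨a, -⟩ := s.eq_empty_or_nonempty
  · exact ⟨0, J.zero_mem, by simp⟩
  have not_subset : ¬ (J : Set R) ⊆ ⋃ i ∈ (s : Set ι), P i := by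
    rw [Ideal.subset_union_prime a a fun i hi _ _ ↦ hP i hi]
    exact fun ⟨i, hi, hle⟩ ↦ hJ i hi hle
  simpa [Set.not_subset] using not_subset

theorem exists_mem_forall_mem_forall_notMem {s t : Finset ι}
    (hP : ∀ i ∈ s, (P i).IsPrime) (hJ : ∀ i ∈ s, ¬ J ≤ P i)
    (hst : ∀ i ∈ s, ∀ j ∈ t, ¬ P j ≤ P i) :
    ∃ v ∈ J, (∀ j ∈ t, v ∈ P j) ∧ ∀ i ∈ s, v ∉ P i := by
  have inf_not_le : ∀ i ∈ s, ¬ J ⊓ t.inf P ≤ P i := by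
    intro i hi
    rw [(hP i hi).inf_le, (hP i hi).inf_le']
    rintro (hle | ⟨j, hj, hle⟩)
    · exact hJ i hi hle
    · exact hst i hi j hj hle
  obtain ⟨v, ⟨hvJ, hvt⟩, hvs⟩ := exists_mem_forall_notMem_of_forall_not_le hP inf_not_le
  exact ⟨v, hvJ, fun j hj ↦ (Finset.inf_le hj : t.inf P ≤ P j) hvt, hvs⟩

theorem stmt_0_general [Finite ι] {x : R} (hP : ∀ i, x ∈ P i → (P i).IsPrime)
    (h : ∀ i, ¬ J + Ideal.span {x} ≤ P i) :
    ∃ v ∈ J, ∀ i, v + x ∉ P i := by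
  classical
  have := Fintype.ofFinite ι
  let bad : Finset ι := {i | x ∈ P i}
  let notLeBad : Finset ι := {j | ∀ i, x ∈ P i → ¬ P j ≤ P i}
  have ideal_not_le_bad : ∀ i ∈ bad, ¬ J ≤ P i := fun i hi hle ↦
    h i (sup_le hle ((P i).span_singleton_le_iff_mem.mpr (by simpa [bad] using hi)))
  obtain ⟨v, hvJ, v_mem_notLeBad, v_notMem_bad⟩ :=
    exists_mem_forall_mem_forall_notMem (s := bad) (t := notLeBad)
      (by simpa [bad] using hP) ideal_not_le_bad (by simp +contextual [bad, notLeBad])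
  have add_notMem_bad : ∀ i, x ∈ P i → v + x ∉ P i := fun i hx hvx ↦
    v_notMem_bad i (by simpa [bad] using hx) (((P i).add_mem_iff_left hx).mp hvx)
  refine ⟨v, hvJ, fun j hvx ↦ ?_⟩
  by_cases hj : ∃ i, x ∈ P i ∧ P j ≤ P i
  · obtain ⟨i, hx, hle⟩ := hj
    exact add_notMem_bad i hx (hle hvx)
  · push Not at hj
    have hv : v ∈ P j := v_mem_notLeBad j (by simpa [notLeBad] using hj)
    exact hj j (((P j).add_mem_iff_right hv).mp hvx) le_rfl

end PrimeAvoidance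

/-- **Lemma 1.1.** Let `Q` be a commutative ring, `P₁, …, P_s` prime ideals of `Q`,
`J` an ideal of `Q`, and `x ∈ Q` such that the ideal `J + (x)` is not contained in the
union `P₁ ∪ … ∪ P_s`.  Then there exists `v ∈ J` with `v + x ∉ P₁ ∪ … ∪ P_s`. -/
theorem stmt_0 (Q : Type*) [CommRing Q] (s : ℕ) (hs : 1 ≤ s)
    (P : Fin s → Ideal Q) (hP : ∀ i, (P i).IsPrime)
    (J : Ideal Q) (x : Q)
    (h : ¬ (↑(J + Ideal.span {x}) : Set Q) ⊆ ⋃ i, (P i : Set Q)) :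
    ∃ v ∈ J, v + x ∉ ⋃ i, (P i : Set Q) := by
  simpa using stmt_0_general (fun i _ ↦ hP i) fun i hi ↦
    h (Set.Subset.trans hi (Set.subset_iUnion (fun i ↦ (P i : Set Q)) i))
end

section
/- Let (Q, 𝔫, k) be a commutative Noetherian local ring and I ⊆ Q a grade 3 perfect ideal of resolution format (1, m, m+n−1, n). If m ≥ 4, then there exists a grade 3 perfect ideal J of resolution format (1, n+3, m+n, m−2) that is directly linked to I. -/
/-- An ideal `I` in a commutative Noetherian local ring `Q` has **resolution format**
`(1, m, m+n-1, n)` if the minimal free resolution of `Q/I` over `Q` is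
`0 → Q^n → Q^{m+n-1} → Q^m → Q`, i.e. there is an exact complex of free modules of the
indicated ranks augmented by `Q → Q/I → 0`, which is minimal in the sense that each
differential maps into `𝔫` times the target (`𝔫` the maximal ideal).  Equivalently, the
`i`-th entry of the format is the Betti number `dim_k Tor_i^Q(Q/I, k)`. -/
def HasResolutionFormat {Q : Type*} [CommRing Q] [IsLocalRing Q]
    (I : Ideal Q) (m n : ℕ) : Prop :=
  ∃ (d1 : (Fin m → Q) →ₗ[Q] Q)
    (d2 : (Fin (m + n - 1) → Q) →ₗ[Q] (Fin m → Q))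
    (d3 : (Fin n → Q) →ₗ[Q] (Fin (m + n - 1) → Q)),
    LinearMap.range d1 = I ∧
    LinearMap.range d2 = LinearMap.ker d1 ∧
    LinearMap.range d3 = LinearMap.ker d2 ∧
    LinearMap.ker d3 = ⊥ ∧
    I ≤ IsLocalRing.maximalIdeal Q ∧
    LinearMap.range d2 ≤ (IsLocalRing.maximalIdeal Q) • (⊤ : Submodule Q (Fin m → Q)) ∧
    LinearMap.range d3 ≤ (IsLocalRing.maximalIdeal Q) • (⊤ : Submodule Q (Fin (m + n - 1) → Q))

/-- `I` is a grade `3` perfect ideal of resolution format `(1, m, m+n-1, n)`: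
`I` contains a `Q`-regular sequence of length `3`, one has `m ≥ 3` and `n ≥ 1`, and the
minimal free resolution of `Q/I` has the format `(1, m, m+n-1, n)` (in particular `Q/I`
has projective dimension `3` as a `Q`-module, since `n ≥ 1`). -/
def IsGrade3PerfectOfFormat {Q : Type*} [CommRing Q] [IsLocalRing Q]
    (I : Ideal Q) (m n : ℕ) : Prop :=
  (∃ x y z : Q, x ∈ I ∧ y ∈ I ∧ z ∈ I ∧ RingTheory.Sequence.IsRegular Q [x, y, z]) ∧
  3 ≤ m ∧ 1 ≤ n ∧ HasResolutionFormat I m n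

/-- `J` is **directly linked** to `I` if there is a `Q`-regular sequence `x₁, x₂, x₃` of
elements of `I` with `J = (x₁, x₂, x₃) : I`. -/
def DirectlyLinked {Q : Type*} [CommRing Q] (I J : Ideal Q) : Prop :=
  ∃ x y z : Q, x ∈ I ∧ y ∈ I ∧ z ∈ I ∧ RingTheory.Sequence.IsRegular Q [x, y, z] ∧
    J = Submodule.colon (Ideal.span {x, y, z}) I

/-- `J` is **linked** to `I` if there is a finite chain of ideals
`I = J₀, J₁, …, J_r = J` in which `J_{i+1}` is directly linked to `J_i` for every `i`. -/
def Linked {Q : Type*} [CommRing Q] (I J : Ideal Q) : Prop :=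
  Relation.ReflTransGen (fun A B => DirectlyLinked A B) I J

/-- `I` is **licci** if it is linked to an ideal generated by a `Q`-regular sequence of
length `3`, i.e. `I` is in the linkage class of a complete intersection ideal. -/
def Licci {Q : Type*} [CommRing Q] (I : Ideal Q) : Prop :=
  ∃ C : Ideal Q, Linked I C ∧
    ∃ x y z : Q, RingTheory.Sequence.IsRegular Q [x, y, z] ∧ C = Ideal.span {x, y, z}

/-!
Let `F` be the minimal resolution of `Q ⧸ I` and let `e 0, e 1, e 2 : F₁` lift a regular sequence
generating `𝔠 ⊆ I`. The dual of the mapping cone of a comparison map from the Koszul complex on `𝔠`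
to `F` resolves `Q ⧸ (𝔠 : I)`, with ranks `1, n + 3, m + n + 2, m`. If `e 0, e 1` are part of a
basis of `F₁`, `e 2 ∈ 𝔫 F₁`, and the Koszul relation between `e 0` and `e 1` lies in `𝔫 (ker d₁)`,
then the only units in the cone are the two coming from `e 0` and `e 1`; cancelling them leaves a
minimal resolution of format `(1, n + 3, m + n, m - 2)`.

Regular sequences can be moved inside cosets of `𝔫 F₁`, so what is needed is a pair that is part of
a basis and whose Koszul relation lies in `𝔫 (ker d₁)`. Start with `e 0, e 1, e 2` regular and part
of a basis, and let `α₂ ε₀ : F₂` be the lift of the relation between `e 1` and `e 2` given by the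
comparison map. If it lies modulo `𝔫 F₂` in the span of the lifts of the other two relations, then
`e 1 + p e 0` and `e 2 + q e 0` form such a pair for suitable `p, q`. Otherwise
`d₁ (e 0) ∈ 𝔫 (𝔠 : I)`, and then `e 0` forms such a pair with any fourth basis vector, modified by
multiples of `e 1` and `e 2`.
-/

open IsLocalRing LinearMap RingTheory.Sequence Matrix
open scoped Pointwise

/-! ### Exactness after applying Hom -/

section HomExactness

variable {Q : Type*} [CommRing Q]
variable {A B C D : Type*} [AddCommGroup A] [AddCommGroup B] [AddCommGroup C] [AddCommGroup D]
variable [Module Q A] [Module Q B] [Module Q C] [Module Q D]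
variable {M : Type*} [AddCommGroup M] [Module Q M]

theorem exists_comp_eq_of_range_le [Module.Projective Q A] {f : A →ₗ[Q] C} {g : B →ₗ[Q] C}
    (h : range f ≤ range g) : ∃ l : A →ₗ[Q] B, g ∘ₗ l = f := by
  obtain ⟨l, hl⟩ := Module.projective_lifting_property g.rangeRestrict
    (f.codRestrict (range g) fun a => h ⟨a, rfl⟩) g.surjective_rangeRestrict
  exact ⟨l, by ext a; exact congrArg Subtype.val (LinearMap.congr_fun hl a)⟩

theorem exists_comp_eq_of_comp_eq_zero [Module.Projective Q A] {f : C →ₗ[Q] B} {g : B →ₗ[Q] D}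
    (hfg : Function.Exact f g) {φ : A →ₗ[Q] B} (h : g ∘ₗ φ = 0) : ∃ l : A →ₗ[Q] C, f ∘ₗ l = φ := by
  refine exists_comp_eq_of_range_le ?_
  rintro _ ⟨a, rfl⟩
  exact (hfg _).1 (LinearMap.congr_fun h a)

/-- Exactness at `Hom(B, M)` of the sequence `Hom(A, M) → Hom(B, M) → Hom(C, M)` obtained from
`C → B → A`; for projective resolutions this is the vanishing of an `Ext` group. -/
def HomExact (M : Type*) [AddCommGroup M] [Module Q M] (f : C →ₗ[Q] B) (g : B →ₗ[Q] A) : Prop :=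
  ∀ φ : B →ₗ[Q] M, φ ∘ₗ f = 0 → ∃ χ : A →ₗ[Q] M, χ ∘ₗ g = φ

theorem homExact_zero_of_isSMulRegular {x : Q} (hx : IsSMulRegular M x) {g : B →ₗ[Q] A}
    (hxg : ∀ a, x • a ∈ range g) : HomExact M g (0 : A →ₗ[Q] Q) := by
  refine fun φ hφ => ⟨0, ?_⟩
  ext a
  obtain ⟨b, hb⟩ := hxg a
  refine hx ?_
  have hφb : φ (g b) = 0 := LinearMap.congr_fun hφ b
  simp only [LinearMap.zero_comp, LinearMap.zero_apply, smul_zero, ← map_smul, ← hb, hφb]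

theorem exists_eq_add_smul_of_mkQ_comp_eq [Module.Projective Q A] {x : Q} {φ ψ : A →ₗ[Q] M}
    (h : (x • (⊤ : Submodule Q M)).mkQ ∘ₗ φ = (x • (⊤ : Submodule Q M)).mkQ ∘ₗ ψ) :
    ∃ θ : A →ₗ[Q] M, φ = ψ + x • θ := by
  obtain ⟨θ, hθ⟩ := exists_comp_eq_of_range_le (f := φ - ψ) (g := LinearMap.lsmul Q M x) (by
    rintro _ ⟨a, rfl⟩
    have : φ a - ψ a ∈ x • (⊤ : Submodule Q M) :=
      (Submodule.Quotient.eq _).1 (LinearMap.congr_fun h a)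
    obtain ⟨m, -, hm⟩ := this
    exact ⟨m, hm⟩)
  refine ⟨θ, eq_add_of_sub_eq' ?_⟩
  rw [← hθ]; rfl

theorem HomExact.of_quotSMulTop [Module.Projective Q A] [Module.Projective Q D] {f : C →ₗ[Q] B}
    {g : B →ₗ[Q] A} {k : A →ₗ[Q] D} {x : Q} (hx : IsSMulRegular M x) (hkg : k ∘ₗ g = 0)
    {s : A →ₗ[Q] B} {t : B →ₗ[Q] C} (hst : f ∘ₗ t + s ∘ₗ g = x • LinearMap.id)
    (h : HomExact (QuotSMulTop x M) g k) : HomExact M f g := by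
  intro φ hφ
  have hxφ : φ ∘ₗ s ∘ₗ g = x • φ := by
    have := congrArg (φ ∘ₗ ·) hst
    simpa only [LinearMap.comp_add, ← LinearMap.comp_assoc, hφ, LinearMap.zero_comp, zero_add,
      LinearMap.comp_smul, LinearMap.comp_id] using this
  let π := (x • (⊤ : Submodule Q M)).mkQ
  obtain ⟨ρ, hρ⟩ := h (π ∘ₗ φ ∘ₗ s) (by
    rw [LinearMap.comp_assoc, LinearMap.comp_assoc, hxφ]
    ext b
    exact (Submodule.Quotient.mk_eq_zero _).2 (Submodule.smul_mem_pointwise_smul _ _ _ trivial))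
  obtain ⟨ρ', hρ'⟩ := Module.projective_lifting_property π ρ (Submodule.mkQ_surjective _)
  obtain ⟨θ, hθ⟩ := exists_eq_add_smul_of_mkQ_comp_eq (φ := φ ∘ₗ s) (ψ := ρ' ∘ₗ k) (x := x)
    (by rw [← hρ, ← hρ']; rfl)
  refine ⟨θ, LinearMap.ext fun b => hx ?_⟩
  have h1 := LinearMap.congr_fun hθ (g b)
  have h2 := LinearMap.congr_fun hxφ b
  have h3 := LinearMap.congr_fun hkg b
  simp only [LinearMap.comp_apply, LinearMap.add_apply, LinearMap.smul_apply,
    LinearMap.zero_apply] at h1 h2 h3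
  simpa [h3, ← h2] using h1.symm

theorem HomExact.quotSMulTop [Module.Projective Q B] [Module.Projective Q C] {x : Q}
    (hx : IsSMulRegular M x) {f' : D →ₗ[Q] C} {f : C →ₗ[Q] B} {g : B →ₗ[Q] A} (hff' : f ∘ₗ f' = 0)
    (hB : HomExact M f g) (hC : HomExact M f' f) : HomExact (QuotSMulTop x M) f g := by
  intro φ hφ
  let π := (x • (⊤ : Submodule Q M)).mkQ
  obtain ⟨φ', hφ'⟩ := Module.projective_lifting_property π φ (Submodule.mkQ_surjective _)
  obtain ⟨θ, hθ⟩ := exists_eq_add_smul_of_mkQ_comp_eq (φ := φ' ∘ₗ f) (ψ := 0) (x := x)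
    (by rw [LinearMap.comp_zero, ← hφ, ← hφ']; rfl)
  rw [zero_add] at hθ
  obtain ⟨ψ, hψ⟩ := hC θ (by
    ext d
    have h1 := LinearMap.congr_fun hθ (f' d)
    have h2 := LinearMap.congr_fun hff' d
    simp only [LinearMap.comp_apply, LinearMap.smul_apply, LinearMap.zero_apply] at h1 h2
    exact hx (by simpa [h2] using h1.symm))
  obtain ⟨χ, hχ⟩ := hB (φ' - x • ψ) (by
    rw [LinearMap.sub_comp, hθ, LinearMap.smul_comp, hψ, sub_self])
  refine ⟨π ∘ₗ χ, ?_⟩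
  rw [LinearMap.comp_assoc, hχ, LinearMap.comp_sub, hφ']
  ext b
  have : π (x • ψ b) = 0 :=
    (Submodule.Quotient.mk_eq_zero _).2 (Submodule.smul_mem_pointwise_smul _ _ _ trivial)
  simp [this]

variable {g : B →ₗ[Q] A} {f : C →ₗ[Q] B} {e : D →ₗ[Q] C} {x y z : Q}

theorem exists_homotopy_zero [Module.Projective Q A] (hx : ∀ a, x • a ∈ range g) :
    ∃ s : A →ₗ[Q] B, g ∘ₗ s = x • LinearMap.id :=
  exists_comp_eq_of_range_le (by rintro _ ⟨a, rfl⟩; exact hx a)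

theorem exists_homotopy_succ [Module.Projective Q B] {E : Type*} [AddCommGroup E] [Module Q E]
    {k : A →ₗ[Q] E} (hfg : Function.Exact f g) (hkg : k ∘ₗ g = 0) {s : A →ₗ[Q] B} {r : E →ₗ[Q] A}
    (hs : g ∘ₗ s + r ∘ₗ k = x • LinearMap.id) :
    ∃ t : B →ₗ[Q] C, f ∘ₗ t + s ∘ₗ g = x • LinearMap.id := by
  obtain ⟨t, ht⟩ := exists_comp_eq_of_comp_eq_zero hfg (φ := x • LinearMap.id - s ∘ₗ g) (by
    have := congrArg (· ∘ₗ g) hs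
    simp only [LinearMap.add_comp, LinearMap.comp_assoc, hkg, LinearMap.comp_zero, add_zero,
      LinearMap.smul_comp, LinearMap.id_comp] at this
    rw [LinearMap.comp_sub, this, LinearMap.comp_smul, LinearMap.comp_id, sub_self])
  exact ⟨t, by rw [ht, sub_add_cancel]⟩

variable [Module.Projective Q A] [Module.Projective Q B]

theorem homExact_of_isWeaklyRegular_pair (hfg : Function.Exact f g)
    (hreg : IsWeaklyRegular M [x, y]) (hx : ∀ a, x • a ∈ range g) (hy : ∀ a, y • a ∈ range g) :
    HomExact M f g := by
  simp only [isWeaklyRegular_cons_iff, IsWeaklyRegular.nil, and_true] at hreg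
  obtain ⟨s, hs⟩ := exists_homotopy_zero hx
  obtain ⟨t, ht⟩ := exists_homotopy_succ (k := (0 : A →ₗ[Q] Q)) (r := 0) hfg
    (LinearMap.zero_comp _) (by rw [hs, LinearMap.zero_comp, add_zero])
  exact .of_quotSMulTop hreg.1 (LinearMap.zero_comp _) ht
    (homExact_zero_of_isSMulRegular hreg.2 hy)

theorem homExact_of_isWeaklyRegular_triple [Module.Projective Q C]
    (hfg : Function.Exact f g) (hef : Function.Exact e f)
    (hreg : IsWeaklyRegular M [x, y, z]) (hx : ∀ a, x • a ∈ range g) (hy : ∀ a, y • a ∈ range g)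
    (hz : ∀ a, z • a ∈ range g) : HomExact M e f := by
  obtain ⟨hregx, hregyz⟩ := (isWeaklyRegular_cons_iff _ _ _).1 hreg
  obtain ⟨s, hs⟩ := exists_homotopy_zero hx
  obtain ⟨t, ht⟩ := exists_homotopy_succ (k := (0 : A →ₗ[Q] Q)) (r := 0) hfg
    (LinearMap.zero_comp _) (by rw [hs, LinearMap.zero_comp, add_zero])
  obtain ⟨u, hu⟩ := exists_homotopy_succ hef hfg.linearMap_comp_eq_zero ht
  exact .of_quotSMulTop hregx hfg.linearMap_comp_eq_zero hu
    (homExact_of_isWeaklyRegular_pair hfg hregyz hy hz)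

end HomExactness

/-! ### Moving regular sequences -/

section RegularElements

variable {Q : Type*} [CommRing Q]

theorem exists_add_notMem_of_forall_not_le {L : Ideal Q} (a : Q) (S : Finset (Ideal Q))
    (hprime : ∀ P ∈ S, P.IsPrime) (hL : ∀ P ∈ S, ¬ L ≤ P) : ∃ w ∈ L, ∀ P ∈ S, a + w ∉ P := by
  classical
  induction S using Finset.strongInduction with
  | H S ih =>
    rcases S.eq_empty_or_nonempty with rfl | hne
    · exact ⟨0, L.zero_mem, by simp⟩
    obtain ⟨P, hPS, hPmin⟩ := S.exists_minimal hne
    obtain ⟨w, hwL, hw⟩ := ih (S.erase P) (Finset.erase_ssubset hPS)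
      (fun R hR => hprime R (Finset.mem_of_mem_erase hR))
      (fun R hR => hL R (Finset.mem_of_mem_erase hR))
    by_cases hawP : a + w ∈ P
    · have hnot : ¬ L ⊓ (S.erase P).inf id ≤ P := by
        rw [(hprime P hPS).inf_le, (hprime P hPS).inf_le', not_or]
        refine ⟨hL P hPS, fun ⟨R, hR, hRP⟩ => Finset.ne_of_mem_erase hR ?_⟩
        exact le_antisymm hRP (hPmin (Finset.mem_of_mem_erase hR) hRP)
      obtain ⟨v, ⟨hvL, hvS⟩, hvP⟩ := Set.not_subset.1 hnot
      refine ⟨w + v, L.add_mem hwL hvL, fun R hR hmem => ?_⟩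
      rw [← add_assoc] at hmem
      by_cases hRP : R = P
      · exact hvP ((P.add_mem_iff_right hawP).1 (hRP ▸ hmem))
      · have hR' : R ∈ S.erase P := Finset.mem_erase.2 ⟨hRP, hR⟩
        exact hw R hR' ((R.add_mem_iff_left (Finset.inf_le (f := id) hR' hvS)).1 hmem)
    · refine ⟨w, hwL, fun R hR => ?_⟩
      by_cases hRP : R = P
      · rwa [hRP]
      · exact hw R (Finset.mem_erase.2 ⟨hRP, hR⟩)

variable {F M : Type*} [AddCommGroup F] [Module Q F] [AddCommGroup M] [Module Q M]

theorem mem_smul_range_iff {A : Ideal Q} {f : F →ₗ[Q] M} {y : M} :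
    y ∈ A • range f ↔ ∃ v ∈ A • (⊤ : Submodule Q F), f v = y := by
  rw [LinearMap.range_eq_map, ← Submodule.map_smul'', Submodule.mem_map]

variable [IsLocalRing Q]

theorem exists_add_isSMulRegular [IsNoetherianRing Q] [Module.Finite Q M] {I : Ideal Q}
    (hI : I ≤ maximalIdeal Q) (hM : ∀ v : M, (∀ a ∈ I, a • v = 0) → v = 0) (a : Q) :
    ∃ w ∈ maximalIdeal Q * I, IsSMulRegular M (a + w) := by
  have hfin := associatedPrimes.finite Q M
  obtain ⟨w, hw, havoid⟩ := exists_add_notMem_of_forall_not_le (L := maximalIdeal Q * I) a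
    hfin.toFinset (fun P hP => ((hfin.mem_toFinset).1 hP).isPrime) (fun P hP hle => by
      rw [hfin.mem_toFinset, AssociatedPrimes.mem_iff, isAssociatedPrime_iff] at hP
      obtain ⟨hprime, v, hv⟩ := hP
      have hIP : I ≤ P := (hprime.mul_le.1 hle).elim hI.trans id
      have hv0 : v = 0 := hM v fun c hc => by
        simpa [hv, Submodule.mem_colon_singleton] using hIP hc
      exact hprime.ne_top (by simp [hv, hv0]))
  refine ⟨w, hw, by_contra fun hirreg => ?_⟩
  have hmem : a + w ∈ ⋃ P ∈ associatedPrimes Q M, (P : Set Q) := by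
    rwa [biUnion_associatedPrimes_eq_compl_regular]
  simp only [Set.mem_iUnion] at hmem
  obtain ⟨P, hP, hawP⟩ := hmem
  exact havoid P (hfin.mem_toFinset.2 hP) hawP

theorem exists_sub_mem_and_isSMulRegular [IsNoetherianRing Q] [Module.Finite Q M]
    {d : F →ₗ[Q] Q} (hd : range d ≤ maximalIdeal Q) (hM : HomExact M d (0 : Q →ₗ[Q] Q)) (u : F) :
    ∃ e : F, e - u ∈ maximalIdeal Q • (⊤ : Submodule Q F) ∧ IsSMulRegular M (d e) := by
  obtain ⟨w, hw, hreg⟩ := exists_add_isSMulRegular (M := M) hd (fun v hv => by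
    obtain ⟨χ, hχ⟩ := hM (LinearMap.toSpanSingleton Q M v) (LinearMap.ext fun z => hv _ ⟨z, rfl⟩)
    simpa using (LinearMap.congr_fun hχ 1).symm) (d u)
  obtain ⟨v, hv, rfl⟩ := mem_smul_range_iff.1 hw
  exact ⟨u + v, by simpa using hv, by simpa using hreg⟩

end RegularElements

section Resolutions

variable {Q : Type*} [CommRing Q]
variable {F₁ F₂ F₃ : Type*} [AddCommGroup F₁] [AddCommGroup F₂] [AddCommGroup F₃]
variable [Module Q F₁] [Module Q F₂] [Module Q F₃]

/-- The complex `0 → F₃ → F₂ → F₁ → Q` is exact except possibly at `Q`: it resolves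
`Q ⧸ range d₁`. -/
structure IsResolution (d₁ : F₁ →ₗ[Q] Q) (d₂ : F₂ →ₗ[Q] F₁) (d₃ : F₃ →ₗ[Q] F₂) : Prop where
  exact_one : Function.Exact d₂ d₁
  exact_two : Function.Exact d₃ d₂
  injective : Function.Injective d₃

variable {d₁ : F₁ →ₗ[Q] Q} {d₂ : F₂ →ₗ[Q] F₁} {d₃ : F₃ →ₗ[Q] F₂}

theorem IsResolution.exists_sub_mem_and_isWeaklyRegular [IsLocalRing Q] [IsNoetherianRing Q]
    [Module.Projective Q F₁] [Module.Projective Q F₂] (hF : IsResolution d₁ d₂ d₃)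
    (hI : range d₁ ≤ maximalIdeal Q) {x y z : Q} (hx : x ∈ range d₁) (hy : y ∈ range d₁)
    (hz : z ∈ range d₁) (hreg : IsWeaklyRegular Q [x, y, z]) (u : Fin 3 → F₁) :
    ∃ e : Fin 3 → F₁, (∀ i, e i - u i ∈ maximalIdeal Q • (⊤ : Submodule Q F₁)) ∧
      IsWeaklyRegular Q [d₁ (e 0), d₁ (e 1), d₁ (e 2)] := by
  have hrange : ∀ {r : Q}, r ∈ range d₁ → ∀ a : Q, r • a ∈ range d₁ := fun hr a =>
    Ideal.mul_mem_right a _ hr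
  have h0 : HomExact Q d₁ (0 : Q →ₗ[Q] Q) :=
    homExact_zero_of_isSMulRegular ((isWeaklyRegular_cons_iff _ _ _).1 hreg).1 (hrange hx)
  have h1 : HomExact Q d₂ d₁ := homExact_of_isWeaklyRegular_pair hF.exact_one
    ((isWeaklyRegular_append_iff Q [x, y] [z]).1 hreg).1 (hrange hx) (hrange hy)
  have h2 : HomExact Q d₃ d₂ := homExact_of_isWeaklyRegular_triple hF.exact_one hF.exact_two hreg
    (hrange hx) (hrange hy) (hrange hz)
  have hd₁₂ := hF.exact_one.linearMap_comp_eq_zero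
  have hd₂₃ := hF.exact_two.linearMap_comp_eq_zero
  obtain ⟨e0, he0, hreg0⟩ := exists_sub_mem_and_isSMulRegular hI h0 (u 0)
  have h0' := HomExact.quotSMulTop hreg0 hd₁₂ h0 h1
  have h1' := HomExact.quotSMulTop hreg0 hd₂₃ h1 h2
  obtain ⟨e1, he1, hreg1⟩ := exists_sub_mem_and_isSMulRegular hI h0' (u 1)
  have h0'' := HomExact.quotSMulTop hreg1 hd₁₂ h0' h1'
  obtain ⟨e2, he2, hreg2⟩ := exists_sub_mem_and_isSMulRegular hI h0'' (u 2)
  refine ⟨![e0, e1, e2], fun i => by fin_cases i <;> assumption, ?_⟩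
  simpa [isWeaklyRegular_cons_iff] using ⟨hreg0, hreg1, hreg2⟩

end Resolutions

/-! ### The Koszul complex on three elements -/

section Koszul

variable {Q : Type*} [CommRing Q]

/-- First differential `Q³ → Q` of the Koszul complex on `x`, in dimension three expressed through
vector algebra: the dot product with `x`. -/
def koszul₁ (x : Fin 3 → Q) : (Fin 3 → Q) →ₗ[Q] Q :=
  dotProductBilin Q Q x

/-- Second differential `Q³ → Q³` of the Koszul complex on `x`: the cross product with `x`, where
the `k`-th basis vector stands for `ε (k + 1) ∧ ε (k + 2)`. -/
def koszul₂ (x : Fin 3 → Q) : (Fin 3 → Q) →ₗ[Q] Fin 3 → Q :=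
  crossProduct.flip x

/-- Third differential `Q → Q³` of the Koszul complex on `x`, sending `1` to `x`. -/
def koszul₃ (x : Fin 3 → Q) : Q →ₗ[Q] Fin 3 → Q :=
  LinearMap.toSpanSingleton Q _ x

variable (x g : Fin 3 → Q)

theorem koszul₁_apply : koszul₁ x g = x ⬝ᵥ g := rfl

theorem koszul₂_apply : koszul₂ x g = g ⨯₃ x := rfl

theorem koszul₃_apply (r : Q) : koszul₃ x r = r • x := rfl

theorem koszul₁_single (i : Fin 3) : koszul₁ x (Pi.single i 1) = x i := by
  rw [koszul₁_apply, dotProduct_single_one]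

theorem range_koszul₁ : range (koszul₁ x) = Ideal.span {x 0, x 1, x 2} := by
  ext a
  simp only [LinearMap.mem_range, koszul₁_apply, vec3_dotProduct, Submodule.mem_span_triple,
    smul_eq_mul]
  constructor
  · rintro ⟨g, rfl⟩
    exact ⟨g 0, g 1, g 2, by ring⟩
  · rintro ⟨a, b, c, rfl⟩
    exact ⟨![a, b, c], by simp; ring⟩

theorem apply_koszul₃_one_mem_range_koszul₁ (ψ : Module.Dual Q (Fin 3 → Q)) :
    ψ (koszul₃ x 1) ∈ range (koszul₁ x) := by
  refine ⟨fun i => ψ (Pi.single i 1), ?_⟩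
  simp only [koszul₃_apply, one_smul, koszul₁_apply]
  conv_rhs => rw [pi_eq_sum_univ' x]
  simp [dotProduct]

variable {x}

theorem exists_eq_mul_of_isWeaklyRegular_triple {x y z : Q} (h : IsWeaklyRegular Q [x, y, z]) :
    IsSMulRegular Q x ∧ (∀ a b, y * a = x * b → ∃ c, a = x * c) ∧
      ∀ a b c, z * a = x * b + y * c → ∃ r s, a = x * r + y * s := by
  have mem_of_mul_mem (i : Fin 3) (a : Q)
      (ha : [x, y, z][i] * a ∈ (Ideal.ofList ([x, y, z].take i) • ⊤ : Ideal Q)) :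
      a ∈ (Ideal.ofList ([x, y, z].take i) • ⊤ : Ideal Q) :=
    (isSMulRegular_quotient_iff_mem_of_smul_mem _ _).1 ((isWeaklyRegular_iff_Fin _ _).1 h i) a ha
  refine ⟨((isWeaklyRegular_cons_iff _ _ _).1 h).1, fun a b hab => ?_, fun a b c habc => ?_⟩
  · have := mem_of_mul_mem 1 a (by simpa [Ideal.mem_span_singleton] using ⟨b, hab⟩)
    change x ∣ a
    simpa [Ideal.mem_span_singleton] using this
  · have key : (Ideal.ofList ([x, y, z].take 2) • ⊤ : Ideal Q) = Ideal.span {x, y} := by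
      simp [Ideal.span_insert]
    have := mem_of_mul_mem 2 a (key ▸ Ideal.mem_span_pair.2 ⟨b, c, by
      simpa [mul_comm b, mul_comm c] using habc.symm⟩)
    obtain ⟨r, s, hrs⟩ := Ideal.mem_span_pair.1 (key ▸ this)
    exact ⟨r, s, by rw [← hrs]; ring⟩

theorem exact_koszul₂_koszul₁ (hx : IsWeaklyRegular Q [x 0, x 1, x 2]) :
    Function.Exact (koszul₂ x) (koszul₁ x) := by
  obtain ⟨h0, h1, h2⟩ := exists_eq_mul_of_isWeaklyRegular_triple hx
  refine LinearMap.exact_of_comp_eq_zero_of_ker_le_range ?_ fun g hg => ?_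
  · ext g
    simp [koszul₁_apply, koszul₂_apply]
  · rw [LinearMap.mem_ker, koszul₁_apply, vec3_dotProduct] at hg
    obtain ⟨a, b, hab⟩ := h2 (g 2) (-g 0) (-g 1) (by linear_combination hg)
    obtain ⟨c, hc⟩ := h1 (g 1 + x 2 * b) (-(g 0 + x 2 * a)) (by
      linear_combination hg - x 2 * hab)
    have hg0 : g 0 = -(x 2 * a + x 1 * c) := h0 (by
      simp only [smul_eq_mul]
      linear_combination hg - x 2 * hab - x 1 * hc)
    refine ⟨![b, -a, c], ?_⟩
    rw [koszul₂_apply, cross_apply]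
    ext i
    fin_cases i
    · change -a * x 2 - c * x 1 = g 0
      linear_combination -hg0
    · change c * x 0 - b * x 2 = g 1
      linear_combination -hc
    · change b * x 1 - -a * x 0 = g 2
      linear_combination -hab

theorem exact_koszul₃_koszul₂ (hx : IsWeaklyRegular Q [x 0, x 1, x 2]) :
    Function.Exact (koszul₃ x) (koszul₂ x) := by
  obtain ⟨h0, h1, -⟩ := exists_eq_mul_of_isWeaklyRegular_triple hx
  refine LinearMap.exact_of_comp_eq_zero_of_ker_le_range ?_ fun g hg => ?_
  · ext i
    simp [koszul₃_apply, koszul₂_apply]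
  · rw [LinearMap.mem_ker, koszul₂_apply, cross_apply] at hg
    have hg1 : g 2 * x 0 - g 0 * x 2 = 0 := congrFun hg 1
    have hg2 : g 0 * x 1 - g 1 * x 0 = 0 := congrFun hg 2
    obtain ⟨c, hc⟩ := h1 (g 0) (g 1) (by linear_combination hg2)
    have hc1 : g 1 = x 1 * c := h0 (by
      simp only [smul_eq_mul]
      linear_combination -hg2 + x 1 * hc)
    have hc2 : g 2 = x 2 * c := h0 (by
      simp only [smul_eq_mul]
      linear_combination hg1 + x 2 * hc)
    refine ⟨c, ?_⟩
    rw [koszul₃_apply]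
    ext i
    fin_cases i <;> simp [hc, hc1, hc2, mul_comm c]

theorem isResolution_koszul (hx : IsWeaklyRegular Q [x 0, x 1, x 2]) :
    IsResolution (koszul₁ x) (koszul₂ x) (koszul₃ x) where
  exact_one := exact_koszul₂_koszul₁ hx
  exact_two := exact_koszul₃_koszul₂ hx
  injective r s hrs := ((isWeaklyRegular_cons_iff _ _ _).1 hx).1 (by
    simpa [koszul₃_apply, mul_comm] using congrFun hrs 0)

end Koszul

/-! ### Mapping cones and colon ideals -/

section ChainMaps

variable {Q : Type*} [CommRing Q]
variable {F₁ F₂ F₃ G₁ G₂ G₃ : Type*} [AddCommGroup F₁] [AddCommGroup F₂] [AddCommGroup F₃]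
variable [AddCommGroup G₁] [AddCommGroup G₂] [AddCommGroup G₃]
variable [Module Q F₁] [Module Q F₂] [Module Q F₃] [Module Q G₁] [Module Q G₂] [Module Q G₃]

/-- The maps `αᵢ : Gᵢ → Fᵢ` together with multiplication by `a` on `Q` form a chain map from the
complex `G₃ → G₂ → G₁ → Q` to the complex `F₃ → F₂ → F₁ → Q`. -/
structure IsChainMapOver (a : Q) (g₁ : G₁ →ₗ[Q] Q) (g₂ : G₂ →ₗ[Q] G₁) (g₃ : G₃ →ₗ[Q] G₂)
    (d₁ : F₁ →ₗ[Q] Q) (d₂ : F₂ →ₗ[Q] F₁) (d₃ : F₃ →ₗ[Q] F₂)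
    (α₁ : G₁ →ₗ[Q] F₁) (α₂ : G₂ →ₗ[Q] F₂) (α₃ : G₃ →ₗ[Q] F₃) : Prop where
  comm_one (g : G₁) : d₁ (α₁ g) = a * g₁ g
  comm_two (g : G₂) : d₂ (α₂ g) = α₁ (g₂ g)
  comm_three (g : G₃) : d₃ (α₃ g) = α₂ (g₃ g)

variable {a : Q} {g₁ : G₁ →ₗ[Q] Q} {g₂ : G₂ →ₗ[Q] G₁} {g₃ : G₃ →ₗ[Q] G₂}
variable {d₁ : F₁ →ₗ[Q] Q} {d₂ : F₂ →ₗ[Q] F₁} {d₃ : F₃ →ₗ[Q] F₂}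

theorem IsResolution.exists_isChainMapOver [Module.Projective Q G₂] [Module.Projective Q G₃]
    (hF : IsResolution d₁ d₂ d₃) (hG : IsResolution g₁ g₂ g₃) {α₁ : G₁ →ₗ[Q] F₁}
    (hα₁ : ∀ g, d₁ (α₁ g) = a * g₁ g) :
    ∃ α₂ α₃, IsChainMapOver a g₁ g₂ g₃ d₁ d₂ d₃ α₁ α₂ α₃ := by
  obtain ⟨α₂, hα₂⟩ := exists_comp_eq_of_comp_eq_zero hF.exact_one (φ := α₁ ∘ₗ g₂) <| by
    ext g
    simp [hα₁, hG.exact_one.apply_apply_eq_zero]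
  have hα₂' := LinearMap.congr_fun hα₂
  obtain ⟨α₃, hα₃⟩ := exists_comp_eq_of_comp_eq_zero hF.exact_two (φ := α₂ ∘ₗ g₃) <| by
    ext g
    simpa [hG.exact_two.apply_apply_eq_zero] using hα₂' (g₃ g)
  exact ⟨α₂, α₃, hα₁, hα₂', LinearMap.congr_fun hα₃⟩

theorem IsChainMapOver.exists_sub_eq_comp [Module.Projective Q G₁] [Module.Projective Q G₂]
    (hF : IsResolution d₁ d₂ d₃) {α₁ β₁ : G₁ →ₗ[Q] F₁} {α₂ β₂ : G₂ →ₗ[Q] F₂} {α₃ β₃ : G₃ →ₗ[Q] F₃}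
    (hα : IsChainMapOver a g₁ g₂ g₃ d₁ d₂ d₃ α₁ α₂ α₃)
    (hβ : IsChainMapOver a g₁ g₂ g₃ d₁ d₂ d₃ β₁ β₂ β₃) (hG : g₂ ∘ₗ g₃ = 0) :
    ∃ κ : G₂ →ₗ[Q] F₃, ∀ g, α₃ g - β₃ g = κ (g₃ g) := by
  obtain ⟨s, hs⟩ := exists_comp_eq_of_comp_eq_zero hF.exact_one (φ := α₁ - β₁) <| by
    ext g
    simp [hα.comm_one, hβ.comm_one]
  have hs' (g : G₁) : d₂ (s g) = α₁ g - β₁ g := LinearMap.congr_fun hs g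
  obtain ⟨κ, hκ⟩ := exists_comp_eq_of_comp_eq_zero hF.exact_two (φ := α₂ - β₂ - s ∘ₗ g₂) <| by
    ext g
    simp [hs', hα.comm_two, hβ.comm_two]
  have hκ' (g : G₂) : d₃ (κ g) = α₂ g - β₂ g - s (g₂ g) := LinearMap.congr_fun hκ g
  have hg (g : G₃) : g₂ (g₃ g) = 0 := LinearMap.congr_fun hG g
  refine ⟨κ, fun g => hF.injective ?_⟩
  simp [hκ', hα.comm_three, hβ.comm_three, hg]

theorem IsChainMapOver.comp {H₁ H₂ H₃ : Type*} [AddCommGroup H₁] [AddCommGroup H₂]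
    [AddCommGroup H₃] [Module Q H₁] [Module Q H₂] [Module Q H₃] {b : Q} {e₁ : H₁ →ₗ[Q] Q}
    {e₂ : H₂ →ₗ[Q] H₁} {e₃ : H₃ →ₗ[Q] H₂} {α₁ : G₁ →ₗ[Q] F₁} {α₂ : G₂ →ₗ[Q] F₂}
    {α₃ : G₃ →ₗ[Q] F₃} {β₁ : F₁ →ₗ[Q] H₁} {β₂ : F₂ →ₗ[Q] H₂} {β₃ : F₃ →ₗ[Q] H₃}
    (hβ : IsChainMapOver b d₁ d₂ d₃ e₁ e₂ e₃ β₁ β₂ β₃)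
    (hα : IsChainMapOver a g₁ g₂ g₃ d₁ d₂ d₃ α₁ α₂ α₃) :
    IsChainMapOver (b * a) g₁ g₂ g₃ e₁ e₂ e₃ (β₁ ∘ₗ α₁) (β₂ ∘ₗ α₂) (β₃ ∘ₗ α₃) where
  comm_one g := by simp [hα.comm_one, hβ.comm_one, mul_assoc]
  comm_two g := by simp [hα.comm_two, hβ.comm_two]
  comm_three g := by simp [hα.comm_three, hβ.comm_three]

theorem isChainMapOver_smul_id (a : Q) (d₁ : F₁ →ₗ[Q] Q) (d₂ : F₂ →ₗ[Q] F₁) (d₃ : F₃ →ₗ[Q] F₂) :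
    IsChainMapOver a d₁ d₂ d₃ d₁ d₂ d₃ (a • LinearMap.id) (a • LinearMap.id)
      (a • LinearMap.id) := by
  constructor <;> simp

theorem isChainMapOver_smulRight (u : F₁) (hd : d₁ ∘ₗ d₂ = 0) (d₃ : F₃ →ₗ[Q] F₂) :
    IsChainMapOver (d₁ u) d₁ d₂ d₃ d₁ d₂ d₃ (d₁.smulRight u) 0 0 where
  comm_one g := by simp [mul_comm]
  comm_two g := by simp [show d₁ (d₂ g) = 0 from LinearMap.congr_fun hd g]
  comm_three g := by simp

end ChainMaps

section MappingCone

variable {Q : Type*} [CommRing Q]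
variable {F₁ F₂ F₃ G₁ G₂ : Type*} [AddCommGroup F₁] [AddCommGroup F₂] [AddCommGroup F₃]
variable [AddCommGroup G₁] [AddCommGroup G₂]
variable [Module Q F₁] [Module Q F₂] [Module Q F₃] [Module Q G₁] [Module Q G₂]
variable {g₁ : G₁ →ₗ[Q] Q} {g₂ : G₂ →ₗ[Q] G₁} {g₃ : Q →ₗ[Q] G₂}
variable {d₁ : F₁ →ₗ[Q] Q} {d₂ : F₂ →ₗ[Q] F₁} {d₃ : F₃ →ₗ[Q] F₂}
variable {α₁ : G₁ →ₗ[Q] F₁} {α₂ : G₂ →ₗ[Q] F₂} {α₃ : Q →ₗ[Q] F₃}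

/-- First differential of the mapping cone of a chain map over `1`, after cancelling the two
copies of `Q` in degree zero. -/
def cone₁ (d₂ : F₂ →ₗ[Q] F₁) (α₁ : G₁ →ₗ[Q] F₁) : F₂ × G₁ →ₗ[Q] F₁ :=
  d₂.coprod α₁

/-- Second differential of the mapping cone of a chain map with degree-two component `α₂`. -/
def cone₂ (d₃ : F₃ →ₗ[Q] F₂) (g₂ : G₂ →ₗ[Q] G₁) (α₂ : G₂ →ₗ[Q] F₂) : F₃ × G₂ →ₗ[Q] F₂ × G₁ :=
  (d₃.coprod α₂).prod (-g₂ ∘ₗ LinearMap.snd Q F₃ G₂)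

/-- Third differential of the mapping cone of a chain map with degree-three component `α₃`; the
source complex ends in `Q`, as a Koszul complex does. -/
def cone₃ (g₃ : Q →ₗ[Q] G₂) (α₃ : Q →ₗ[Q] F₃) : Q →ₗ[Q] F₃ × G₂ :=
  α₃.prod (-g₃)

theorem cone₁_apply (p : F₂ × G₁) : cone₁ d₂ α₁ p = d₂ p.1 + α₁ p.2 := rfl

theorem cone₂_apply (p : F₃ × G₂) : cone₂ d₃ g₂ α₂ p = (d₃ p.1 + α₂ p.2, -g₂ p.2) := rfl

theorem cone₃_apply (r : Q) : cone₃ g₃ α₃ r = (α₃ r, -g₃ r) := rfl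

theorem exact_cone₂_cone₁ (hF : IsResolution d₁ d₂ d₃) (hG : IsResolution g₁ g₂ g₃)
    (hα : IsChainMapOver 1 g₁ g₂ g₃ d₁ d₂ d₃ α₁ α₂ α₃) :
    Function.Exact (cone₂ d₃ g₂ α₂) (cone₁ d₂ α₁) := by
  refine LinearMap.exact_of_comp_eq_zero_of_ker_le_range ?_ ?_
  · refine LinearMap.ext fun p => ?_
    simp [cone₁_apply, cone₂_apply, hF.exact_two.apply_apply_eq_zero, hα.comm_two]
  · rintro ⟨w, g⟩ hwg
    rw [LinearMap.mem_ker, cone₁_apply] at hwg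
    have hg : g₁ g = 0 := by
      simpa [hF.exact_one.apply_apply_eq_zero, hα.comm_one] using congrArg d₁ hwg
    obtain ⟨k, rfl⟩ := (hG.exact_one g).1 hg
    obtain ⟨z, hz⟩ := (hF.exact_two (w + α₂ k)).1 (by rw [map_add, hα.comm_two, hwg])
    exact ⟨(z, -k), by simp [cone₂_apply, hz]⟩

theorem exact_cone₃_cone₂ (hF : IsResolution d₁ d₂ d₃) (hG : IsResolution g₁ g₂ g₃)
    (hα : IsChainMapOver 1 g₁ g₂ g₃ d₁ d₂ d₃ α₁ α₂ α₃) :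
    Function.Exact (cone₃ g₃ α₃) (cone₂ d₃ g₂ α₂) := by
  refine LinearMap.exact_of_comp_eq_zero_of_ker_le_range ?_ ?_
  · refine LinearMap.ext fun r => ?_
    simp [cone₂_apply, cone₃_apply, hG.exact_two.apply_apply_eq_zero, hα.comm_three]
  · rintro ⟨z, g⟩ hzg
    rw [LinearMap.mem_ker, cone₂_apply, Prod.mk_eq_zero, neg_eq_zero] at hzg
    obtain ⟨r, rfl⟩ := (hG.exact_two g).1 hzg.2
    refine ⟨-r, Prod.ext (hF.injective ?_) (by simp [cone₃_apply])⟩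
    change d₃ (α₃ (-r)) = d₃ z
    rw [hα.comm_three, map_neg, map_neg]
    exact neg_eq_of_add_eq_zero_left hzg.1

theorem smul_mem_range_cone₁ (hF : IsResolution d₁ d₂ d₃)
    (hα : IsChainMapOver 1 g₁ g₂ g₃ d₁ d₂ d₃ α₁ α₂ α₃) {c : Q} (hc : c ∈ range g₁) (e : F₁) :
    c • e ∈ range (cone₁ d₂ α₁) := by
  obtain ⟨g, rfl⟩ := hc
  obtain ⟨w, hw⟩ := (hF.exact_one (g₁ g • e - d₁ e • α₁ g)).1 (by
    simp [hα.comm_one, mul_comm])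
  exact ⟨(w, d₁ e • g), by simp [cone₁_apply, hw]⟩

theorem isResolution_dual_cone [Module.Projective Q F₁] [Module.Projective Q F₂]
    [Module.Projective Q F₃] [Module.Projective Q G₁] [Module.Projective Q G₂]
    (hF : IsResolution d₁ d₂ d₃) (hG : IsResolution g₁ g₂ g₃)
    (hα : IsChainMapOver 1 g₁ g₂ g₃ d₁ d₂ d₃ α₁ α₂ α₃) {x y z : Q}
    (hx : x ∈ range g₁) (hy : y ∈ range g₁) (hz : z ∈ range g₁)
    (hreg : IsWeaklyRegular Q [x, y, z]) :
    IsResolution (Module.Dual.eval Q _ (cone₃ g₃ α₃ 1)) (cone₂ d₃ g₂ α₂).dualMap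
      (cone₁ d₂ α₁).dualMap := by
  have hx' := smul_mem_range_cone₁ hF hα hx
  have hy' := smul_mem_range_cone₁ hF hα hy
  have hz' := smul_mem_range_cone₁ hF hα hz
  have h₂₁ := exact_cone₂_cone₁ hF hG hα
  have h₃₂ := exact_cone₃_cone₂ hF hG hα
  refine ⟨fun φ => ⟨fun hφ => ?_, ?_⟩, fun φ => ⟨fun hφ => ?_, ?_⟩, ?_⟩
  · exact homExact_of_isWeaklyRegular_triple h₂₁ h₃₂ hreg hx' hy' hz' φ
      (LinearMap.ext_ring hφ)
  · rintro ⟨χ, rfl⟩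
    simp [h₃₂.apply_apply_eq_zero]
  · exact homExact_of_isWeaklyRegular_pair h₂₁
      ((isWeaklyRegular_append_iff Q [x, y] [z]).1 hreg).1 hx' hy' φ hφ
  · rintro ⟨χ, rfl⟩
    ext p <;> simp [h₂₁.apply_apply_eq_zero]
  · rw [injective_iff_map_eq_zero]
    intro φ hφ
    obtain ⟨χ, hχ⟩ := homExact_zero_of_isSMulRegular
      ((isWeaklyRegular_cons_iff _ _ _).1 hreg).1 hx' φ hφ
    rw [← hχ, LinearMap.comp_zero]

theorem range_eval_cone₃ [Module.Projective Q F₁] [Module.Projective Q F₂]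
    [Module.Projective Q F₃] [Module.Projective Q G₁] [Module.Projective Q G₂]
    (hF : IsResolution d₁ d₂ d₃) (hG : IsResolution g₁ g₂ g₃)
    (hα : IsChainMapOver 1 g₁ g₂ g₃ d₁ d₂ d₃ α₁ α₂ α₃)
    (hg₃ : ∀ ψ : Module.Dual Q G₂, ψ (g₃ 1) ∈ range g₁) :
    range (Module.Dual.eval Q _ (cone₃ g₃ α₃ 1)) = Submodule.colon (range g₁) (range d₁) := by
  ext a
  rw [Submodule.mem_colon]
  constructor
  · rintro ⟨φ, rfl⟩ _ ⟨u, rfl⟩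
    obtain ⟨κ, hκ⟩ := (isChainMapOver_smul_id (d₁ u) d₁ d₂ d₃).exists_sub_eq_comp hF
      (isChainMapOver_smulRight u hF.exact_one.linearMap_comp_eq_zero d₃)
      hF.exact_two.linearMap_comp_eq_zero
    have h := congrArg (φ ∘ₗ LinearMap.inl Q F₃ G₂) (hκ (α₃ 1))
    convert Submodule.sub_mem _ (hg₃ (φ ∘ₗ LinearMap.inl Q F₃ G₂ ∘ₗ κ ∘ₗ α₂))
      (Ideal.mul_mem_right (d₁ u) _ (hg₃ (φ ∘ₗ LinearMap.inr Q F₃ G₂))) using 1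
    have hcone : φ (cone₃ g₃ α₃ 1) = φ (α₃ 1, 0) - φ (0, g₃ 1) := by
      rw [cone₃_apply, ← map_sub, Prod.mk_sub_mk, sub_zero, zero_sub]
    have htop : d₁ u * φ (α₃ 1, 0) = φ (κ (α₂ (g₃ 1)), 0) := by
      simpa [hα.comm_three] using h
    simp only [Module.Dual.eval_apply, hcone, LinearMap.comp_apply, LinearMap.inl_apply,
      LinearMap.inr_apply, smul_eq_mul]
    linear_combination htop
  · intro ha
    obtain ⟨γ₁, hγ₁⟩ := exists_comp_eq_of_range_le (f := a • d₁) (g := g₁) (by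
      rintro _ ⟨u, rfl⟩
      exact ha _ ⟨u, rfl⟩)
    obtain ⟨γ₂, γ₃, hγ⟩ := hG.exists_isChainMapOver hF (LinearMap.congr_fun hγ₁)
    obtain ⟨κ, hκ⟩ := (hγ.comp hα).exists_sub_eq_comp hG
      (by rw [mul_one]; exact isChainMapOver_smul_id a g₁ g₂ g₃) hG.exact_two.linearMap_comp_eq_zero
    refine ⟨γ₃.coprod κ, ?_⟩
    have hκ₁ : γ₃ (α₃ 1) - a = κ (g₃ 1) := by simpa using hκ 1
    simp [cone₃_apply, ← hκ₁]

end MappingCone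

/-! ### Reduction modulo an ideal -/

section SmulTop

variable {Q : Type*} [CommRing Q] {A : Ideal Q}
variable {M P : Type*} [AddCommGroup M] [Module Q M] [AddCommGroup P] [Module Q P]

theorem map_mem_smul_top (f : M →ₗ[Q] P) {v : M} (hv : v ∈ A • (⊤ : Submodule Q M)) :
    f v ∈ A • (⊤ : Submodule Q P) :=
  Submodule.smul_top_le_comap_smul_top A f hv

theorem apply_mem_of_mem_smul_top (φ : M →ₗ[Q] Q) {v : M} (hv : v ∈ A • (⊤ : Submodule Q M)) :
    φ v ∈ A := by
  simpa using map_mem_smul_top φ hv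

theorem mem_smul_top_of_forall_apply_mem [Module.Free Q M] [Module.Finite Q M]
    {φ : Module.Dual Q M} (hφ : ∀ v, φ v ∈ A) : φ ∈ A • (⊤ : Submodule Q (Module.Dual Q M)) := by
  rw [← (Module.Free.chooseBasis Q M).sum_dual_apply_smul_coord φ]
  exact Submodule.sum_mem _ fun i _ => Submodule.smul_mem_smul (hφ _) trivial

theorem prod_mem_smul_top {v : M} {w : P} (hv : v ∈ A • (⊤ : Submodule Q M))
    (hw : w ∈ A • (⊤ : Submodule Q P)) : (v, w) ∈ A • (⊤ : Submodule Q (M × P)) := by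
  simpa using Submodule.add_mem _ (map_mem_smul_top (LinearMap.inl Q M P) hv)
    (map_mem_smul_top (LinearMap.inr Q M P) hw)

theorem mem_smul_top_pi {ι : Type*} [Finite ι] {c : ι → Q} (hc : ∀ i, c i ∈ A) :
    c ∈ A • (⊤ : Submodule Q (ι → Q)) := by
  have := Fintype.ofFinite ι
  classical
  rw [pi_eq_sum_univ' c]
  exact Submodule.sum_mem _ fun i _ => Submodule.smul_mem_smul (hc i) trivial

variable {π : M →ₗ[Q] P}

theorem mem_smul_top_of_coe_mem [Module.Projective Q P] (hπ : Function.Surjective π)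
    {v : ker π} (hv : (v : M) ∈ A • (⊤ : Submodule Q M)) : v ∈ A • (⊤ : Submodule Q (ker π)) := by
  obtain ⟨s, hs⟩ := π.exists_rightInverse_of_surjective (range_eq_top.2 hπ)
  have hs' (p : P) : π (s p) = p := LinearMap.congr_fun hs p
  let retraction : M →ₗ[Q] ker π :=
    (LinearMap.id - s ∘ₗ π).codRestrict (ker π) fun v => by simp [hs']
  have hv' : retraction v = v := Subtype.ext (by simp [retraction])
  exact hv' ▸ map_mem_smul_top retraction hv

theorem nonempty_equiv_ker_prod [Module.Projective Q P] (hπ : Function.Surjective π) :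
    Nonempty (M ≃ₗ[Q] ker π × P) := by
  obtain ⟨s, hs⟩ := π.exists_rightInverse_of_surjective (range_eq_top.2 hπ)
  exact ⟨(π.exact_subtype_ker_map.splitSurjectiveEquiv (ker π).injective_subtype ⟨s, hs⟩).1⟩

theorem projective_ker_of_surjective [Module.Projective Q M] [Module.Projective Q P]
    (hπ : Function.Surjective π) : Module.Projective Q (ker π) := by
  obtain ⟨e⟩ := nonempty_equiv_ker_prod hπ
  exact .of_split (e.symm.toLinearMap ∘ₗ LinearMap.inl Q _ P) (LinearMap.fst Q _ P ∘ₗ e.toLinearMap)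
    (by ext; simp)

theorem finrank_ker_add_finrank [Nontrivial Q] [Module.Free Q P] [Module.Finite Q P]
    [Module.Free Q (ker π)] [Module.Finite Q (ker π)] (hπ : Function.Surjective π) :
    Module.finrank Q (ker π) + Module.finrank Q P = Module.finrank Q M := by
  obtain ⟨e⟩ := nonempty_equiv_ker_prod hπ
  rw [e.finrank_eq, Module.finrank_prod]

theorem free_ker_of_surjective [IsLocalRing Q] [Module.Projective Q M] [Module.Finite Q M]
    [Module.Projective Q P] (hπ : Function.Surjective π) :
    Module.Free Q (ker π) ∧ Module.Finite Q (ker π) := by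
  obtain ⟨e⟩ := nonempty_equiv_ker_prod hπ
  have : Module.Finite Q (ker π) := .of_surjective (LinearMap.fst Q _ P ∘ₗ e.toLinearMap)
    (Prod.fst_surjective.comp e.surjective)
  have := projective_ker_of_surjective hπ
  exact ⟨Module.free_of_flat_of_isLocalRing, inferInstance⟩

end SmulTop

section Unimodular

variable {Q : Type*} [CommRing Q] {ι F : Type*} [AddCommGroup F] [Module Q F]

/-- Evaluation of functionals at a family of vectors, the dual of the map `Q^ι → F` it defines. -/
def evalAt (e : ι → F) : Module.Dual Q F →ₗ[Q] ι → Q :=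
  LinearMap.pi fun i => Module.Dual.eval Q F (e i)

theorem evalAt_apply (e : ι → F) (φ : Module.Dual Q F) (i : ι) : evalAt e φ i = φ (e i) := rfl

/-- A family of vectors is unimodular when functionals take arbitrary values on it, i.e. when it
is a basis of a free direct summand. -/
def IsUnimodular (Q : Type*) [CommRing Q] {ι F : Type*} [AddCommGroup F] [Module Q F]
    (e : ι → F) : Prop :=
  Function.Surjective (evalAt (Q := Q) e)

theorem isUnimodular_basis_comp {κ : Type*} (b : Module.Basis κ Q F) {f : ι → κ}
    (hf : Function.Injective f) : IsUnimodular Q (b ∘ f) := by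
  intro c
  refine ⟨b.constr Q (Function.extend f c 0), funext fun i => ?_⟩
  simp [evalAt_apply, hf.extend_apply]

theorem IsUnimodular.of_sub_mem [IsLocalRing Q] [Finite ι] {e e' : ι → F}
    (he : IsUnimodular Q e) (hee' : ∀ i, e' i - e i ∈ maximalIdeal Q • (⊤ : Submodule Q F)) :
    IsUnimodular Q e' := by
  have hfg : (⊤ : Submodule Q (ι → Q)).FG := Module.Finite.fg_top
  refine range_eq_top.1 (top_le_iff.1 ?_)
  refine Submodule.le_of_le_smul_of_le_jacobson_bot hfg (maximalIdeal_le_jacobson ⊥) fun c _ => ?_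
  obtain ⟨φ, rfl⟩ := he c
  have hφ : evalAt e φ = evalAt e' φ - evalAt (e' - e) φ := by
    ext i
    simp [evalAt_apply]
  rw [hφ]
  exact Submodule.sub_mem _ (Submodule.mem_sup_left ⟨φ, rfl⟩)
    (Submodule.mem_sup_right (mem_smul_top_pi fun i => apply_mem_of_mem_smul_top φ (hee' i)))

end Unimodular

/-! ### Minimal resolutions -/

section Minimal

variable {Q : Type*} [CommRing Q] [IsLocalRing Q]
variable {F₁ F₂ F₃ : Type*} [AddCommGroup F₁] [AddCommGroup F₂] [AddCommGroup F₃]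
variable [Module Q F₁] [Module Q F₂] [Module Q F₃]

/-- A resolution is minimal when every differential has entries in the maximal ideal. -/
structure IsMinimalResolution (d₁ : F₁ →ₗ[Q] Q) (d₂ : F₂ →ₗ[Q] F₁) (d₃ : F₃ →ₗ[Q] F₂) : Prop
    extends IsResolution d₁ d₂ d₃ where
  range_one_le : range d₁ ≤ maximalIdeal Q
  range_two_le : range d₂ ≤ maximalIdeal Q • (⊤ : Submodule Q F₁)
  range_three_le : range d₃ ≤ maximalIdeal Q • (⊤ : Submodule Q F₂)

theorem HasResolutionFormat.exists_isMinimalResolution {I : Ideal Q} {m n : ℕ}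
    (h : HasResolutionFormat I m n) :
    ∃ (d₁ : (Fin m → Q) →ₗ[Q] Q) (d₂ : (Fin (m + n - 1) → Q) →ₗ[Q] Fin m → Q)
      (d₃ : (Fin n → Q) →ₗ[Q] Fin (m + n - 1) → Q),
      range d₁ = I ∧ IsMinimalResolution d₁ d₂ d₃ := by
  obtain ⟨d₁, d₂, d₃, hI, h₁, h₂, h₃, hle₁, hle₂, hle₃⟩ := h
  exact ⟨d₁, d₂, d₃, hI, ⟨exact_iff.2 h₁.symm, exact_iff.2 h₂.symm, ker_eq_bot.1 h₃⟩,
    hI.trans_le hle₁, hle₂, hle₃⟩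

variable {d₁ : F₁ →ₗ[Q] Q} {d₂ : F₂ →ₗ[Q] F₁} {d₃ : F₃ →ₗ[Q] F₂}

theorem IsMinimalResolution.hasResolutionFormat [Module.Free Q F₁] [Module.Free Q F₂]
    [Module.Free Q F₃] [Module.Finite Q F₁] [Module.Finite Q F₂] [Module.Finite Q F₃] {a b : ℕ}
    (hF : IsMinimalResolution d₁ d₂ d₃) (ha : Module.finrank Q F₁ = a)
    (hab : Module.finrank Q F₂ = a + b - 1) (hb : Module.finrank Q F₃ = b) :
    HasResolutionFormat (range d₁) a b := by
  let E₁ := (Module.finBasisOfFinrankEq Q F₁ ha).equivFun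
  let E₂ := (Module.finBasisOfFinrankEq Q F₂ hab).equivFun
  let E₃ := (Module.finBasisOfFinrankEq Q F₃ hb).equivFun
  refine ⟨d₁ ∘ₗ E₁.symm.toLinearMap, E₁.toLinearMap ∘ₗ d₂ ∘ₗ E₂.symm.toLinearMap,
    E₂.toLinearMap ∘ₗ d₃ ∘ₗ E₃.symm.toLinearMap, ?_, ?_, ?_, ?_, hF.range_one_le, ?_, ?_⟩
  · simp [LinearMap.range_comp]
  · ext v
    simpa [LinearEquiv.eq_symm_apply, E₂.symm.surjective.exists] using
      (hF.exact_one (E₁.symm v)).symm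
  · ext v
    simpa [LinearEquiv.eq_symm_apply, E₃.symm.surjective.exists] using
      (hF.exact_two (E₂.symm v)).symm
  · rw [ker_eq_bot]
    exact E₂.injective.comp (hF.injective.comp E₃.symm.injective)
  · rintro _ ⟨v, rfl⟩
    exact map_mem_smul_top E₁.toLinearMap (hF.range_two_le ⟨_, rfl⟩)
  · rintro _ ⟨v, rfl⟩
    exact map_mem_smul_top E₂.toLinearMap (hF.range_three_le ⟨_, rfl⟩)

theorem IsMinimalResolution.mem_smul_top_of_apply_mem (hF : IsMinimalResolution d₁ d₂ d₃) {f : F₂}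
    (hf : d₂ f ∈ maximalIdeal Q • ker d₁) : f ∈ maximalIdeal Q • (⊤ : Submodule Q F₂) := by
  rw [exact_iff.1 hF.exact_one, mem_smul_range_iff] at hf
  obtain ⟨v, hv, hvf⟩ := hf
  have hker : f - v ∈ range d₃ := (hF.exact_two _).1 (by rw [map_sub, hvf, sub_self])
  simpa using Submodule.add_mem _ (hF.range_three_le hker) hv

theorem IsMinimalResolution.colon_le_maximalIdeal [Module.Finite Q F₁]
    (hF : IsMinimalResolution d₁ d₂ d₃) {G : Type*} [AddCommGroup G] [Module Q G]
    [Module.Finite Q G] {α : G →ₗ[Q] F₁} (hrank : Module.finrank Q G < Module.finrank Q F₁) :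
    Submodule.colon (range (d₁ ∘ₗ α)) (range d₁) ≤ maximalIdeal Q := by
  refine le_maximalIdeal fun htop => hrank.not_ge (finrank_le_finrank_of_surjective (f := α) ?_)
  refine range_eq_top.1 (top_le_iff.1 (Submodule.le_of_le_smul_of_le_jacobson_bot
    (I := maximalIdeal Q) Module.Finite.fg_top (maximalIdeal_le_jacobson ⊥) fun u _ => ?_))
  have h1 : (1 : Q) ∈ Submodule.colon (range (d₁ ∘ₗ α)) (range d₁) := htop ▸ trivial
  obtain ⟨g, hg⟩ := Submodule.mem_colon.1 h1 (d₁ u) ⟨u, rfl⟩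
  have hker : u - α g ∈ range d₂ := (hF.exact_one _).1 (by
    rw [map_sub, sub_eq_zero]; simpa using hg.symm)
  rw [← add_sub_cancel (α g) u]
  exact Submodule.add_mem_sup ⟨g, rfl⟩ (hF.range_two_le hker)

end Minimal

section KoszulSyzygy

variable {Q : Type*} [CommRing Q] {F : Type*} [AddCommGroup F] [Module Q F] (d : F →ₗ[Q] Q)

/-- The Koszul relation between `d u` and `d v`. -/
def koszulSyzygy (u v : F) : F :=
  d u • v - d v • u

theorem koszulSyzygy_mem_ker (u v : F) : koszulSyzygy d u v ∈ ker d := by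
  simp [koszulSyzygy, mul_comm]

theorem koszulSyzygy_swap (u v : F) : koszulSyzygy d v u = -koszulSyzygy d u v := by
  simp [koszulSyzygy]

variable {d} {A : Ideal Q}

theorem koszulSyzygy_mem_of_mem_right (u : F) {v : F} (hv : v ∈ A • (⊤ : Submodule Q F)) :
    koszulSyzygy d u v ∈ A • ker d := by
  let f : F →ₗ[Q] F := d u • LinearMap.id - d.smulRight u
  have hf : range f ≤ ker d := by
    rintro _ ⟨w, rfl⟩
    exact koszulSyzygy_mem_ker d u w
  exact Submodule.smul_mono le_rfl hf (mem_smul_range_iff.2 ⟨v, hv, rfl⟩)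

theorem koszulSyzygy_mem_of_mem_left {u : F} (hu : u ∈ A • (⊤ : Submodule Q F)) (v : F) :
    koszulSyzygy d u v ∈ A • ker d := by
  rw [koszulSyzygy_swap]
  exact Submodule.neg_mem _ (koszulSyzygy_mem_of_mem_right v hu)

theorem linearCombination_koszul₂ (e : Fin 3 → F) (g : Fin 3 → Q) :
    Fintype.linearCombination Q e (koszul₂ (d ∘ e) g) =
      g 0 • koszulSyzygy d (e 1) (e 2) + g 1 • koszulSyzygy d (e 2) (e 0) +
        g 2 • koszulSyzygy d (e 0) (e 1) := by
  simp only [Fintype.linearCombination_apply, Fin.sum_univ_three, koszul₂_apply, cross_apply,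
    koszulSyzygy, Function.comp_apply, cons_val]
  module

theorem comp_linearCombination (e : Fin 3 → F) :
    d ∘ₗ Fintype.linearCombination Q e = koszul₁ (d ∘ e) := by
  ext i
  simp [koszul₁_apply]

variable {F₂ F₃ : Type*} [AddCommGroup F₂] [AddCommGroup F₃] [Module Q F₂] [Module Q F₃]
variable {d₁ : F →ₗ[Q] Q} {d₂ : F₂ →ₗ[Q] F} {d₃ : F₃ →ₗ[Q] F₂} {e : Fin 3 → F}

/-- `α₂` and `α₃` extend the map `Q³ → F₁` with values `e i` on the basis vectors to a chain map
over the identity of `Q` from the Koszul complex on the elements `d₁ (e i)`. -/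
abbrev IsKoszulComparison (d₁ : F →ₗ[Q] Q) (d₂ : F₂ →ₗ[Q] F) (d₃ : F₃ →ₗ[Q] F₂) (e : Fin 3 → F)
    (α₂ : (Fin 3 → Q) →ₗ[Q] F₂) (α₃ : Q →ₗ[Q] F₃) : Prop :=
  IsChainMapOver 1 (koszul₁ (d₁ ∘ e)) (koszul₂ (d₁ ∘ e)) (koszul₃ (d₁ ∘ e)) d₁ d₂ d₃
    (Fintype.linearCombination Q e) α₂ α₃

theorem IsResolution.exists_isKoszulComparison (hF : IsResolution d₁ d₂ d₃)
    (hreg : IsWeaklyRegular Q [d₁ (e 0), d₁ (e 1), d₁ (e 2)]) :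
    ∃ α₂ α₃, IsKoszulComparison d₁ d₂ d₃ e α₂ α₃ :=
  hF.exists_isChainMapOver (isResolution_koszul hreg) fun g => by
    rw [one_mul, ← comp_linearCombination]; rfl

end KoszulSyzygy

/-! ### Pairs of generators with trivial Koszul relation -/

section AlternatingLift

variable {Q : Type*} [CommRing Q]
variable {T M N : Type*} [AddCommGroup T] [AddCommGroup M] [AddCommGroup N]
variable [Module Q T] [Module Q M] [Module Q N]

theorem exists_isAlt_comp_eq [Module.Free Q T] {f : M →ₗ[Q] N} {B : T →ₗ[Q] T →ₗ[Q] N}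
    (hB : B.IsAlt) (hBf : ∀ v w, B v w ∈ range f) :
    ∃ G : T →ₗ[Q] T →ₗ[Q] M, G.IsAlt ∧ ∀ v w, f (G v w) = B v w := by
  classical
  let b := Module.Free.chooseBasis Q T
  let : LinearOrder (Module.Free.ChooseBasisIndex Q T) := linearOrderOfSTO WellOrderingRel
  choose lift hlift using hBf
  let U : T →ₗ[Q] T →ₗ[Q] M :=
    b.constr Q fun i => b.constr Q fun j => if i < j then lift (b i) (b j) else 0
  have hU (i j) : U (b i) (b j) = if i < j then lift (b i) (b j) else 0 := by
    simp [U, Module.Basis.constr_basis]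
  refine ⟨U - U.flip, fun v => by simp, fun v w => ?_⟩
  suffices h : (U - U.flip).compr₂ f = B from LinearMap.congr_fun₂ h v w
  refine LinearMap.ext_basis b b fun i j => ?_
  rcases lt_trichotomy i j with hij | rfl | hij
  · simp [hU, hij, hij.not_gt, hlift]
  · simp [hB (b i)]
  · simp [hU, hij, hij.not_gt, hlift, hB.neg]

end AlternatingLift

section Pair

variable {Q : Type*} [CommRing Q]
variable {T : Type*} [AddCommGroup T] [Module Q T] [Module.Free Q T]

/-- The alternating form `(v, w) ↦ j v • c w - j w • c v` takes values in `ker (koszul₁ x)`, so it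
lifts along `koszul₂ x` to an alternating form `G`. The map `w ↦ G a w + j w • g - ε₀ × c w` then
consists of cycles, hence is `w ↦ t w • x`; as `G a a = 0`, its value at `a` is `g 0 • x`. -/
theorem apply_zero_mem_of_koszul {A : Ideal Q} {x : Fin 3 → Q}
    (hx : IsResolution (koszul₁ x) (koszul₂ x) (koszul₃ x)) {j : T →ₗ[Q] Q}
    {c : T →ₗ[Q] Fin 3 → Q} {y : Q} (hc : ∀ w, koszul₁ x (c w) = y * j w) {a : T}
    (ha : a ∈ A • (⊤ : Submodule Q T)) (hja : j a = x 0) {g : Fin 3 → Q}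
    (hg : koszul₂ x g = c a - y • Pi.single 0 1) : g 0 ∈ A := by
  let U : T →ₗ[Q] T →ₗ[Q] Fin 3 → Q := (LinearMap.lsmul Q (Fin 3 → Q)).compl₁₂ j c
  have hB (v w : T) : (U - U.flip) v w = j v • c w - j w • c v := rfl
  obtain ⟨G, hGalt, hG⟩ := exists_isAlt_comp_eq (f := koszul₂ x) (B := U - U.flip)
    (fun v => by simp) fun v w => (hx.exact_one _).1 (by
      rw [hB, map_sub, map_smul, map_smul, hc, hc, smul_eq_mul, smul_eq_mul]
      ring)
  have hGa (w : T) : koszul₂ x (G a w) = x 0 • c w - j w • c a := by rw [hG, hB, hja]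
  have hcross (w : T) :
      koszul₂ x (Pi.single 0 1 ⨯₃ c w) = x 0 • c w - (y * j w) • Pi.single 0 1 := by
    have hcx : c w ⬝ᵥ x = y * j w := (dotProduct_comm _ _).trans (hc w)
    rw [koszul₂_apply, cross_cross_eq_smul_sub_smul, hcx, single_one_dotProduct]
  obtain ⟨t, ht⟩ := exists_comp_eq_of_comp_eq_zero hx.exact_two
    (φ := G a + j.smulRight g - crossProduct (Pi.single 0 1) ∘ₗ c) <| by
      refine LinearMap.ext fun w => ?_
      simp only [LinearMap.comp_apply, LinearMap.sub_apply, LinearMap.add_apply, smulRight_apply,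
        map_sub, map_add, map_smul, hGa, hcross, hg, LinearMap.zero_apply]
      module
  have hta : t a • x = g 0 • x := by
    have hca : c a = g ⨯₃ x + y • Pi.single 0 1 := eq_add_of_sub_eq hg.symm
    have hta : t a • x = G a a + j a • g - Pi.single 0 1 ⨯₃ c a := LinearMap.congr_fun ht a
    rw [hta, hGalt a, hja, hca, map_add, map_smul, cross_self, cross_cross_eq_smul_sub_smul',
      single_one_dotProduct, dotProduct_single_one]
    module
  exact hx.injective hta ▸ apply_mem_of_mem_smul_top t ha

variable {F : Type*} [AddCommGroup F] [Module Q F] {d : F →ₗ[Q] Q} {e : Fin 3 → F} {A : Ideal Q}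

theorem exists_koszulSyzygy_sub_mem
    (hx : IsResolution (koszul₁ (d ∘ e)) (koszul₂ (d ∘ e)) (koszul₃ (d ∘ e))) {j : T →ₗ[Q] Q}
    {u : F} (hj : ∀ w, d u * j w ∈ range (koszul₁ (d ∘ e))) {a : T}
    (ha : a ∈ A • (⊤ : Submodule Q T)) (hja : j a = d (e 0)) :
    ∃ p q : Q, koszulSyzygy d (e 0) (u - p • e 1 - q • e 2) ∈ A • ker d := by
  obtain ⟨c, hc⟩ := exists_comp_eq_of_range_le (f := d u • j) (g := koszul₁ (d ∘ e)) (by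
    rintro _ ⟨w, rfl⟩
    exact hj w)
  have hc' (w : T) : koszul₁ (d ∘ e) (c w) = d u * j w := LinearMap.congr_fun hc w
  obtain ⟨g, hg⟩ := (hx.exact_one (c a - d u • Pi.single 0 1)).1 (by
    simp [hc', hja, koszul₁_single])
  have hg0 : g 0 ∈ A := apply_zero_mem_of_koszul hx hc' ha hja hg
  let L : T →ₗ[Q] F := j.smulRight u - Fintype.linearCombination Q e ∘ₗ c
  have hLker : range L ≤ ker d := by
    rintro _ ⟨w, rfl⟩
    have hdc : d (Fintype.linearCombination Q e (c w)) = d u * j w := by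
      rw [← hc', ← comp_linearCombination, LinearMap.comp_apply]
    simp [L, hdc, mul_comm]
  have hLa : L a ∈ A • ker d := Submodule.smul_mono le_rfl hLker (mem_smul_range_iff.2 ⟨a, ha, rfl⟩)
  refine ⟨g 2, -g 1, ?_⟩
  convert Submodule.add_mem _ hLa
    (Submodule.smul_mem_smul hg0 (koszulSyzygy_mem_ker d (e 1) (e 2))) using 1
  have hca : Fintype.linearCombination Q e (c a) = d u • e 0 +
      Fintype.linearCombination Q e (koszul₂ (d ∘ e) g) := by
    rw [hg, map_sub, map_smul, Fintype.linearCombination_apply_single, one_smul,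
      add_sub_cancel]
  simp only [L, LinearMap.sub_apply, LinearMap.comp_apply, smulRight_apply, hca, hja,
    linearCombination_koszul₂, koszulSyzygy, map_sub, map_smul, smul_eq_mul]
  module

end Pair

section Frame

variable {Q : Type*} [CommRing Q] [IsLocalRing Q]
variable {F₁ F₂ F₃ : Type*} [AddCommGroup F₁] [AddCommGroup F₂] [AddCommGroup F₃]
variable [Module Q F₁] [Module Q F₂] [Module Q F₃]

theorem exists_isUnit_apply_of_notMem [Module.Projective Q F₂] {N : Submodule Q F₂} {f : F₂}
    (hf : f ∉ N ⊔ maximalIdeal Q • (⊤ : Submodule Q F₂)) :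
    ∃ ξ : Module.Dual Q F₂, IsUnit (ξ f) ∧ ∀ v ∈ N, ξ v ∈ maximalIdeal Q := by
  let S := N ⊔ maximalIdeal Q • (⊤ : Submodule Q F₂)
  have htors : Module.IsTorsionBySet Q (F₂ ⧸ S) (maximalIdeal Q) := by
    rintro ⟨v⟩ ⟨r, hr⟩
    exact (Submodule.Quotient.mk_eq_zero S).2
      (Submodule.mem_sup_right (Submodule.smul_mem_smul hr trivial))
  let : Module (ResidueField Q) (F₂ ⧸ S) := htors.module
  have : IsScalarTower Q (ResidueField Q) (F₂ ⧸ S) := htors.isScalarTower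
  have hf' : S.mkQ f ∉ (⊥ : Submodule (ResidueField Q) (F₂ ⧸ S)) := by simpa using hf
  obtain ⟨η, hη, -⟩ := Submodule.exists_le_ker_of_notMem hf'
  obtain ⟨ξ, hξ⟩ := Module.projective_lifting_property (Algebra.linearMap Q (ResidueField Q))
    (η.restrictScalars Q ∘ₗ S.mkQ) residue_surjective
  have hξ' (v : F₂) : residue Q (ξ v) = η (S.mkQ v) := LinearMap.congr_fun hξ v
  refine ⟨ξ, ?_, fun v hv => ?_⟩
  · rwa [← residue_ne_zero_iff_isUnit, hξ']
  · have hvS : S.mkQ v = 0 := (Submodule.Quotient.mk_eq_zero S).2 (Submodule.mem_sup_left hv)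
    rw [← residue_eq_zero_iff, hξ', hvS, map_zero]

variable {d₁ : F₁ →ₗ[Q] Q} {d₂ : F₂ →ₗ[Q] F₁} {d₃ : F₃ →ₗ[Q] F₂} {e : Fin 3 → F₁}
variable {α₂ : (Fin 3 → Q) →ₗ[Q] F₂} {α₃ : Q →ₗ[Q] F₃}

theorem IsResolution.exists_koszulSyzygy_add_mem_of_mem (hF : IsResolution d₁ d₂ d₃)
    (hα : IsKoszulComparison d₁ d₂ d₃ e α₂ α₃)
    (h : α₂ (Pi.single 0 1) ∈ Submodule.span Q {α₂ (Pi.single 1 1), α₂ (Pi.single 2 1)} ⊔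
      maximalIdeal Q • (⊤ : Submodule Q F₂)) :
    ∃ p q : Q, koszulSyzygy d₁ (e 1 + p • e 0) (e 2 + q • e 0) ∈ maximalIdeal Q • ker d₁ := by
  obtain ⟨_, hs, z, hz, hsz⟩ := Submodule.mem_sup.1 h
  obtain ⟨p, q, rfl⟩ := Submodule.mem_span_pair.1 hs
  refine ⟨p, q, ?_⟩
  rw [exact_iff.1 hF.exact_one, mem_smul_range_iff]
  refine ⟨z, hz, ?_⟩
  rw [← eq_sub_iff_add_eq'] at hsz
  simp only [hsz, map_sub, map_add, map_smul, hα.comm_two, linearCombination_koszul₂]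
  simp only [Fin.isValue, Pi.single_eq_same, koszulSyzygy, one_smul, ne_eq, one_ne_zero,
    not_false_eq_true, Pi.single_eq_of_ne, zero_smul, add_zero, Fin.reduceEq, zero_ne_one, zero_add,
    map_add, map_smul, smul_eq_mul, smul_add]
  module

theorem IsMinimalResolution.exists_dual_apply_cone₃_eq [Module.Projective Q F₂]
    [Module.Free Q F₃] [Module.Finite Q F₃]
    (hF : IsMinimalResolution d₁ d₂ d₃)
    (hα : IsKoszulComparison d₁ d₂ d₃ e α₂ α₃)
    (h : α₂ (Pi.single 0 1) ∉ Submodule.span Q {α₂ (Pi.single 1 1), α₂ (Pi.single 2 1)} ⊔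
      maximalIdeal Q • (⊤ : Submodule Q F₂)) :
    ∃ a ∈ maximalIdeal Q • (⊤ : Submodule Q (Module.Dual Q (F₃ × (Fin 3 → Q)))),
      a (cone₃ (koszul₃ (d₁ ∘ e)) α₃ 1) = d₁ (e 0) := by
  obtain ⟨ξ, hξ, hξN⟩ := exists_isUnit_apply_of_notMem h
  obtain ⟨v, hv⟩ := hξ.exists_left_inv
  have h1 := hξN _ (Submodule.subset_span (Set.mem_insert _ _))
  have h2 := hξN _ (Submodule.subset_span (Set.mem_insert_of_mem _ rfl))
  refine ⟨v • ξ ∘ₗ d₃.coprod α₂ - LinearMap.proj 0 ∘ₗ LinearMap.snd Q F₃ (Fin 3 → Q),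
    mem_smul_top_of_forall_apply_mem ?_, ?_⟩
  · rintro ⟨z, g⟩
    have hz := apply_mem_of_mem_smul_top ξ (hF.range_three_le ⟨z, rfl⟩)
    convert Ideal.mul_mem_left _ v (add_mem hz
      (add_mem (Ideal.mul_mem_left _ (g 1) h1) (Ideal.mul_mem_left _ (g 2) h2))) using 1
    have hg : ξ (α₂ g) = g 0 * ξ (α₂ (Pi.single 0 1)) + g 1 * ξ (α₂ (Pi.single 1 1)) +
        g 2 * ξ (α₂ (Pi.single 2 1)) := by
      conv_lhs => rw [pi_eq_sum_univ' g]
      simp [Fin.sum_univ_three]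
    simp only [LinearMap.sub_apply, LinearMap.smul_apply, LinearMap.comp_apply, coprod_apply,
      map_add, hg, snd_apply, proj_apply, smul_eq_mul]
    linear_combination g 0 * hv
  · simp [cone₃_apply, hα.comm_three, koszul₃_apply]

theorem IsMinimalResolution.exists_koszulSyzygy_sub_mem_of_notMem [Module.Projective Q F₁]
    [Module.Projective Q F₂] [Module.Free Q F₃] [Module.Finite Q F₃]
    (hF : IsMinimalResolution d₁ d₂ d₃)
    (hK : IsResolution (koszul₁ (d₁ ∘ e)) (koszul₂ (d₁ ∘ e)) (koszul₃ (d₁ ∘ e)))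
    (hα : IsKoszulComparison d₁ d₂ d₃ e α₂ α₃)
    (h : α₂ (Pi.single 0 1) ∉ Submodule.span Q {α₂ (Pi.single 1 1), α₂ (Pi.single 2 1)} ⊔
      maximalIdeal Q • (⊤ : Submodule Q F₂)) (u : F₁) :
    ∃ p q : Q, koszulSyzygy d₁ (e 0) (u - p • e 1 - q • e 2) ∈ maximalIdeal Q • ker d₁ := by
  obtain ⟨a, ha, hja⟩ := hF.exists_dual_apply_cone₃_eq hα h
  refine exists_koszulSyzygy_sub_mem
    (j := Module.Dual.eval Q _ (cone₃ (koszul₃ (d₁ ∘ e)) α₃ 1)) hK (fun w => ?_) ha hja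
  have hcolon := range_eval_cone₃ hF.toIsResolution hK hα (apply_koszul₃_one_mem_range_koszul₁ _)
  rw [mul_comm]
  exact Submodule.mem_colon.1 (hcolon.le ⟨w, rfl⟩) (d₁ u) ⟨u, rfl⟩

theorem IsMinimalResolution.exists_isUnimodular_koszulSyzygy_mem
    [IsNoetherianRing Q] [Module.Free Q F₁] [Module.Finite Q F₁] [Module.Projective Q F₂]
    [Module.Free Q F₃] [Module.Finite Q F₃]
    (hF : IsMinimalResolution d₁ d₂ d₃) (hrank : 4 ≤ Module.finrank Q F₁) {x y z : Q}
    (hx : x ∈ range d₁) (hy : y ∈ range d₁) (hz : z ∈ range d₁)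
    (hreg : IsWeaklyRegular Q [x, y, z]) :
    ∃ u v : F₁, IsUnimodular Q ![u, v] ∧ koszulSyzygy d₁ u v ∈ maximalIdeal Q • ker d₁ := by
  let b : Fin 4 → F₁ := Module.finBasis Q F₁ ∘ Fin.castLE hrank
  have hb : IsUnimodular Q b := isUnimodular_basis_comp _ (Fin.castLE_injective hrank)
  obtain ⟨e, he, hreg⟩ := hF.exists_sub_mem_and_isWeaklyRegular hF.range_one_le hx hy hz hreg
    (b ∘ Fin.castSucc)
  have he' : IsUnimodular Q ![e 0, e 1, e 2, b 3] := by
    refine hb.of_sub_mem fun i => ?_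
    fin_cases i
    exacts [he 0, he 1, he 2, by simp]
  obtain ⟨α₂, α₃, hα⟩ := hF.exists_isKoszulComparison hreg
  by_cases h : α₂ (Pi.single 0 1) ∈ Submodule.span Q {α₂ (Pi.single 1 1), α₂ (Pi.single 2 1)} ⊔
      maximalIdeal Q • (⊤ : Submodule Q F₂)
  · obtain ⟨p, q, hpq⟩ := hF.exists_koszulSyzygy_add_mem_of_mem hα h
    refine ⟨_, _, fun c => ?_, hpq⟩
    obtain ⟨φ, hφ⟩ := he' ![0, c 0, c 1, 0]
    have h0 : φ (e 0) = 0 := congrFun hφ 0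
    have h1 : φ (e 1) = c 0 := congrFun hφ 1
    have h2 : φ (e 2) = c 1 := congrFun hφ 2
    exact ⟨φ, funext fun i => by fin_cases i <;> simp [evalAt_apply, h0, h1, h2]⟩
  · obtain ⟨p, q, hpq⟩ :=
      hF.exists_koszulSyzygy_sub_mem_of_notMem (isResolution_koszul hreg) hα h (b 3)
    refine ⟨_, _, fun c => ?_, hpq⟩
    obtain ⟨φ, hφ⟩ := he' ![c 0, 0, 0, c 1]
    have h0 : φ (e 0) = c 0 := congrFun hφ 0
    have h1 : φ (e 1) = 0 := congrFun hφ 1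
    have h2 : φ (e 2) = 0 := congrFun hφ 2
    have h3 : φ (b 3) = c 1 := congrFun hφ 3
    exact ⟨φ, funext fun i => by fin_cases i <;> simp [evalAt_apply, h0, h1, h2, h3]⟩

theorem IsMinimalResolution.exists_isWeaklyRegular_isUnimodular_koszulSyzygy_mem
    [IsNoetherianRing Q] [Module.Free Q F₁] [Module.Finite Q F₁] [Module.Projective Q F₂]
    [Module.Free Q F₃] [Module.Finite Q F₃]
    (hF : IsMinimalResolution d₁ d₂ d₃) (hrank : 4 ≤ Module.finrank Q F₁) {x y z : Q}
    (hx : x ∈ range d₁) (hy : y ∈ range d₁) (hz : z ∈ range d₁)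
    (hreg : IsWeaklyRegular Q [x, y, z]) :
    ∃ e : Fin 3 → F₁, IsWeaklyRegular Q [d₁ (e 0), d₁ (e 1), d₁ (e 2)] ∧
      IsUnimodular Q ![e 0, e 1] ∧ e 2 ∈ maximalIdeal Q • (⊤ : Submodule Q F₁) ∧
      koszulSyzygy d₁ (e 0) (e 1) ∈ maximalIdeal Q • ker d₁ := by
  obtain ⟨u, v, huv, hker⟩ := hF.exists_isUnimodular_koszulSyzygy_mem hrank hx hy hz hreg
  obtain ⟨e, he, hreg'⟩ :=
    hF.exists_sub_mem_and_isWeaklyRegular hF.range_one_le hx hy hz hreg ![u, v, 0]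
  refine ⟨e, hreg', huv.of_sub_mem fun i => ?_, by simpa using he 2, ?_⟩
  · fin_cases i
    exacts [he 0, he 1]
  · convert Submodule.add_mem _ hker (Submodule.add_mem _
      (koszulSyzygy_mem_of_mem_left (d := d₁) (he 0) v)
      (koszulSyzygy_mem_of_mem_right (d := d₁) (e 0) (he 1))) using 1
    simp only [koszulSyzygy, Fin.isValue, cons_val_zero, map_sub, cons_val_one]
    module

end Frame

/-! ### The linked ideal -/

section Trim

variable {Q : Type*} [CommRing Q]
variable {F₁ F₂ F₃ P : Type*} [AddCommGroup F₁] [AddCommGroup F₂] [AddCommGroup F₃]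
variable [AddCommGroup P] [Module Q F₁] [Module Q F₂] [Module Q F₃] [Module Q P]
variable {d₁ : F₁ →ₗ[Q] Q} {d₂ : F₂ →ₗ[Q] F₁} {d₃ : F₃ →ₗ[Q] F₂}

theorem IsResolution.restrict_ker (hF : IsResolution d₁ d₂ d₃) {π : F₂ →ₗ[Q] P}
    (hπ : Function.Surjective (π ∘ₗ d₃)) :
    IsResolution d₁ (d₂ ∘ₗ (ker π).subtype)
      (d₃.restrict (p := ker (π ∘ₗ d₃)) (q := ker π) fun _ hv => hv) := by
  refine ⟨fun v => ⟨fun hv => ?_, ?_⟩, fun w => ⟨fun hw => ?_, ?_⟩, fun v w hvw => ?_⟩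
  · obtain ⟨w, rfl⟩ := (hF.exact_one v).1 hv
    obtain ⟨z, hz⟩ := hπ (π w)
    refine ⟨⟨w - d₃ z, ?_⟩, by simp [hF.exact_two.apply_apply_eq_zero]⟩
    rw [LinearMap.mem_ker, map_sub, sub_eq_zero]
    exact hz.symm
  · rintro ⟨w, rfl⟩
    exact hF.exact_one.apply_apply_eq_zero _
  · obtain ⟨z, hz⟩ := (hF.exact_two w).1 hw
    exact ⟨⟨z, by simp [hz]⟩, Subtype.ext hz⟩
  · rintro ⟨z, rfl⟩
    exact hF.exact_two.apply_apply_eq_zero _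
  · exact Subtype.ext (hF.injective (congrArg Subtype.val hvw))

theorem IsResolution.hasResolutionFormat_of_restrict_ker [IsLocalRing Q]
    [Module.Free Q F₁] [Module.Free Q F₂] [Module.Free Q F₃] [Module.Free Q P]
    [Module.Finite Q F₁] [Module.Finite Q F₂] [Module.Finite Q F₃] [Module.Finite Q P]
    (hF : IsResolution d₁ d₂ d₃) {π : F₂ →ₗ[Q] P} (hπ : Function.Surjective (π ∘ₗ d₃))
    (h₁ : range d₁ ≤ maximalIdeal Q) (h₂ : range d₂ ≤ maximalIdeal Q • (⊤ : Submodule Q F₁))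
    (h₃ : ∀ v, π (d₃ v) = 0 → d₃ v ∈ maximalIdeal Q • (⊤ : Submodule Q F₂)) {a b : ℕ}
    (ha : Module.finrank Q F₁ = a) (hab : Module.finrank Q F₂ = a + b - 1 + Module.finrank Q P)
    (hb : Module.finrank Q F₃ = b + Module.finrank Q P) :
    HasResolutionFormat (range d₁) a b := by
  have hπ' : Function.Surjective π := .of_comp hπ
  obtain ⟨_, _⟩ := free_ker_of_surjective hπ
  obtain ⟨_, _⟩ := free_ker_of_surjective hπ'
  have hmin : IsMinimalResolution d₁ (d₂ ∘ₗ (ker π).subtype)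
      (d₃.restrict (p := ker (π ∘ₗ d₃)) (q := ker π) fun _ hv => hv) := by
    refine ⟨hF.restrict_ker hπ, h₁, (range_comp_le_range _ _).trans h₂, ?_⟩
    rintro _ ⟨v, rfl⟩
    exact mem_smul_top_of_coe_mem hπ' (h₃ v v.2)
  exact hmin.hasResolutionFormat ha
    (Nat.add_right_cancel ((finrank_ker_add_finrank hπ').trans hab))
    (Nat.add_right_cancel ((finrank_ker_add_finrank hπ).trans hb))

end Trim

section Linkage

variable {Q : Type*} [CommRing Q]
variable {F₁ F₂ F₃ : Type*} [AddCommGroup F₁] [AddCommGroup F₂] [AddCommGroup F₃]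
variable [Module Q F₁] [Module Q F₂] [Module Q F₃]
variable {d₁ : F₁ →ₗ[Q] Q} {d₂ : F₂ →ₗ[Q] F₁} {d₃ : F₃ →ₗ[Q] F₂} {e : Fin 3 → F₁}

/-- The coordinates of a functional on `F × Q³` at the first two basis vectors of `Q³`: the part of
the dual of the mapping cone that cancels. -/
def firstTwoCoords (Q F : Type*) [CommRing Q] [AddCommGroup F] [Module Q F] :
    Module.Dual Q (F × (Fin 3 → Q)) →ₗ[Q] Fin 2 → Q :=
  evalAt fun i => (0, Pi.single i.castSucc 1)

theorem firstTwoCoords_comp_dualMap_cone₁ :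
    firstTwoCoords Q F₂ ∘ₗ (cone₁ d₂ (Fintype.linearCombination Q e)).dualMap =
      evalAt ![e 0, e 1] := by
  refine LinearMap.ext fun φ => funext fun i => ?_
  fin_cases i <;> simp [firstTwoCoords, evalAt_apply, cone₁_apply]

variable [IsLocalRing Q] {α₂ : (Fin 3 → Q) →ₗ[Q] F₂} {α₃ : Q →ₗ[Q] F₃}

theorem IsMinimalResolution.apply_mem_smul_top_of_isKoszulComparison
    (hF : IsMinimalResolution d₁ d₂ d₃)
    (hα : IsKoszulComparison d₁ d₂ d₃ e α₂ α₃)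
    (he2 : e 2 ∈ maximalIdeal Q • (⊤ : Submodule Q F₁))
    (he01 : koszulSyzygy d₁ (e 0) (e 1) ∈ maximalIdeal Q • ker d₁) (g : Fin 3 → Q) :
    α₂ g ∈ maximalIdeal Q • (⊤ : Submodule Q F₂) := by
  refine hF.mem_smul_top_of_apply_mem ?_
  rw [hα.comm_two, linearCombination_koszul₂]
  exact Submodule.add_mem _ (Submodule.add_mem _
    (Submodule.smul_mem _ _ (koszulSyzygy_mem_of_mem_right _ he2))
    (Submodule.smul_mem _ _ (koszulSyzygy_mem_of_mem_left he2 _)))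
    (Submodule.smul_mem _ _ he01)

theorem IsMinimalResolution.range_dualMap_cone₂_le [Module.Free Q F₃] [Module.Finite Q F₃]
    (hF : IsMinimalResolution d₁ d₂ d₃)
    (hα : IsKoszulComparison d₁ d₂ d₃ e α₂ α₃)
    (he2 : e 2 ∈ maximalIdeal Q • (⊤ : Submodule Q F₁))
    (he01 : koszulSyzygy d₁ (e 0) (e 1) ∈ maximalIdeal Q • ker d₁) :
    range (cone₂ d₃ (koszul₂ (d₁ ∘ e)) α₂).dualMap ≤
      maximalIdeal Q • (⊤ : Submodule Q (Module.Dual Q (F₃ × (Fin 3 → Q)))) := by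
  rintro _ ⟨φ, rfl⟩
  refine mem_smul_top_of_forall_apply_mem fun p => apply_mem_of_mem_smul_top φ ?_
  refine prod_mem_smul_top (Submodule.add_mem _ (hF.range_three_le ⟨_, rfl⟩)
    (hF.apply_mem_smul_top_of_isKoszulComparison hα he2 he01 _)) (Submodule.neg_mem _ ?_)
  exact map_mem_smul_top (crossProduct p.2)
    (mem_smul_top_pi fun i => hF.range_one_le ⟨e i, rfl⟩)

theorem IsMinimalResolution.dualMap_cone₁_mem [Module.Free Q F₂] [Module.Finite Q F₂]
    (hF : IsMinimalResolution d₁ d₂ d₃) (he2 : e 2 ∈ maximalIdeal Q • (⊤ : Submodule Q F₁))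
    {φ : Module.Dual Q F₁} (hφ0 : φ (e 0) = 0) (hφ1 : φ (e 1) = 0) :
    (cone₁ d₂ (Fintype.linearCombination Q e)).dualMap φ ∈
      maximalIdeal Q • (⊤ : Submodule Q (Module.Dual Q (F₂ × (Fin 3 → Q)))) := by
  refine mem_smul_top_of_forall_apply_mem fun p => ?_
  simp only [dualMap_apply, cone₁_apply, Fintype.linearCombination_apply, Fin.sum_univ_three,
    map_add, map_smul, hφ0, hφ1, smul_zero, zero_add]
  exact add_mem (apply_mem_of_mem_smul_top φ (hF.range_two_le ⟨_, rfl⟩))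
    (Ideal.mul_mem_left _ _ (apply_mem_of_mem_smul_top φ he2))

theorem IsMinimalResolution.hasResolutionFormat_colon
    [Module.Free Q F₁] [Module.Finite Q F₁] [Module.Free Q F₂] [Module.Finite Q F₂]
    [Module.Free Q F₃] [Module.Finite Q F₃]
    (hF : IsMinimalResolution d₁ d₂ d₃)
    (hreg : IsWeaklyRegular Q [d₁ (e 0), d₁ (e 1), d₁ (e 2)])
    (he : IsUnimodular Q ![e 0, e 1]) (he2 : e 2 ∈ maximalIdeal Q • (⊤ : Submodule Q F₁))
    (he01 : koszulSyzygy d₁ (e 0) (e 1) ∈ maximalIdeal Q • ker d₁)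
    {m n : ℕ} (hm : 4 ≤ m) (hF₁ : Module.finrank Q F₁ = m)
    (hF₂ : Module.finrank Q F₂ = m + n - 1) (hF₃ : Module.finrank Q F₃ = n) :
    HasResolutionFormat (Submodule.colon (Ideal.span {d₁ (e 0), d₁ (e 1), d₁ (e 2)}) (range d₁))
      (n + 3) (m - 2) := by
  obtain ⟨α₂, α₃, hα⟩ := hF.exists_isKoszulComparison hreg
  have hK := isResolution_koszul (x := d₁ ∘ e) hreg
  have mem_range (i : Fin 3) : d₁ (e i) ∈ range (koszul₁ (d₁ ∘ e)) :=
    ⟨_, koszul₁_single _ i⟩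
  have hcone := isResolution_dual_cone hF.toIsResolution hK hα (mem_range 0) (mem_range 1)
    (mem_range 2) hreg
  have hcolon := range_eval_cone₃ hF.toIsResolution hK hα (apply_koszul₃_one_mem_range_koszul₁ _)
  change HasResolutionFormat (Submodule.colon
    (Ideal.span {(d₁ ∘ e) 0, (d₁ ∘ e) 1, (d₁ ∘ e) 2}) (range d₁)) (n + 3) (m - 2)
  rw [← range_koszul₁, ← hcolon]
  refine hcone.hasResolutionFormat_of_restrict_ker (π := firstTwoCoords Q F₂) ?_ ?_
    (hF.range_dualMap_cone₂_le hα he2 he01) (fun φ hφ => ?_) ?_ ?_ ?_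
  · rwa [firstTwoCoords_comp_dualMap_cone₁]
  · rw [hcolon, ← comp_linearCombination]
    exact hF.colon_le_maximalIdeal (by rw [Module.finrank_fin_fun, hF₁]; omega)
  · rw [← LinearMap.comp_apply, firstTwoCoords_comp_dualMap_cone₁] at hφ
    exact hF.dualMap_cone₁_mem he2 (congrFun hφ 0) (congrFun hφ 1)
  · rw [Module.finrank_linearMap_self, Module.finrank_prod, hF₃,
      Module.finrank_fin_fun]
  · rw [Module.finrank_linearMap_self, Module.finrank_prod, hF₂,
      Module.finrank_fin_fun, Module.finrank_fin_fun]
    omega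
  · rw [Module.finrank_linearMap_self, hF₁, Module.finrank_fin_fun]
    omega

end Linkage

/-- **Proposition 1.2(a).** Let `Q` be a commutative Noetherian local ring and `I ⊆ Q` a
grade `3` perfect ideal of resolution format `(1, m, m+n-1, n)`.  If `m ≥ 4`, then there
exists a grade `3` perfect ideal of resolution format `(1, n+3, m+n, m-2)` that is
directly linked to `I`. -/
theorem stmt_2 (Q : Type*) [CommRing Q] [IsNoetherianRing Q] [IsLocalRing Q]
    (I : Ideal Q) (m n : ℕ) (hI : IsGrade3PerfectOfFormat I m n) (hm : 4 ≤ m) :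
    ∃ J : Ideal Q, IsGrade3PerfectOfFormat J (n + 3) (m - 2) ∧ DirectlyLinked I J := by
  obtain ⟨⟨x, y, z, hx, hy, hz, hreg⟩, -, -, hformat⟩ := hI
  obtain ⟨d₁, d₂, d₃, rfl, hF⟩ := hformat.exists_isMinimalResolution
  obtain ⟨e, he, hunimod, he2, he01⟩ :=
    hF.exists_isWeaklyRegular_isUnimodular_koszulSyzygy_mem (by simpa using hm) hx hy hz
      hreg.toIsWeaklyRegular
  have hregular : IsRegular Q [d₁ (e 0), d₁ (e 1), d₁ (e 2)] := by
    rw [IsLocalRing.isRegular_iff_isWeaklyRegular_of_subset_maximalIdeal]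
    · exact he
    · simpa using ⟨hF.range_one_le ⟨e 0, rfl⟩, hF.range_one_le ⟨e 1, rfl⟩,
        hF.range_one_le ⟨e 2, rfl⟩⟩
  let c : Ideal Q := Ideal.span {d₁ (e 0), d₁ (e 1), d₁ (e 2)}
  have hc : c ≤ Submodule.colon c (range d₁) := fun a ha =>
    Submodule.mem_colon.2 fun r _ => Ideal.mul_mem_right r c ha
  have hformat' : HasResolutionFormat (Submodule.colon c (range d₁)) (n + 3) (m - 2) :=
    hF.hasResolutionFormat_colon he hunimod he2 he01 hm (by simp) (by simp) (by simp)
  refine ⟨Submodule.colon c (range d₁), ⟨⟨_, _, _, ?_, ?_, ?_, hregular⟩, by omega, by omega,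
    hformat'⟩, _, _, _, ⟨e 0, rfl⟩, ⟨e 1, rfl⟩, ⟨e 2, rfl⟩, hregular, rfl⟩
  all_goals exact hc (Ideal.subset_span (by simp))
end

section
/- Let (Q, 𝔫, k) be a commutative Noetherian local ring and I ⊆ Q a grade 3 perfect ideal of resolution format (1, m, m+n−1, n). If m ≥ 5, then there exists a grade 3 perfect ideal J of resolution format (1, n+3, m+n−1, m−3) that is directly linked to I. -/
/-! Let `F` be the minimal free resolution of `Q ⧸ I`. It carries a product satisfying the Leibniz
rule, and the dual of the mapping cone of the comparison map from the Koszul complex on a regular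
sequence `x, y, z` in `I` to `F` resolves `Q ⧸ (x, y, z) : I`. If `x, y, z` lift to part of a basis
of `F₁`, three further summands cancel and the ranks become `1, n + 3, m + n - 1, m - 3`; the
remaining complex is minimal as soon as the pairwise products of the lifts lie in `𝔫F₂`.

To find such lifts, reduce the product modulo `𝔫`. Composed with any functional, it satisfies the
three-term Plücker relation, because the analogous relation holds over `Q` up to boundaries whenever
three of its arguments map to a regular sequence, and every triple in `F₁` is congruent modulo `𝔫F₁`
to such a triple. Hence the product `k ⊗ F₁ × k ⊗ F₁ → k ⊗ F₂` vanishes on a subspace of codimension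
at most two, which for `m ≥ 5` contains three independent vectors. Lifts of these vectors can again
be moved within their classes so that their images form a regular sequence. -/

open RingTheory.Sequence CategoryTheory.Abelian Module
open scoped TensorProduct

section CosetAvoidance

variable {R : Type*} [CommRing R]

theorem exists_mem_forall_add_notMem_of_antichain {L : Ideal R} {s : Finset (Ideal R)} (x : R)
    (hprime : ∀ P ∈ s, P.IsPrime) (hL : ∀ P ∈ s, ¬ L ≤ P)
    (hanti : IsAntichain (· ≤ ·) (s : Set (Ideal R))) :
    ∃ l ∈ L, ∀ P ∈ s, x + l ∉ P := by
  classical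
  let T : Ideal R := L * ∏ P ∈ s with x ∉ P, P
  have T_le : ∀ P ∈ s, x ∉ P → T ≤ P := fun P hP hxP =>
    Ideal.mul_le_right.trans <| Ideal.prod_le_inf.trans <|
      Finset.inf_le (f := id) (Finset.mem_filter.2 ⟨hP, hxP⟩)
  have not_T_le : ∀ P ∈ s, x ∈ P → ¬ T ≤ P := by
    intro P hP hxP hTP
    obtain hLP | hprod := (hprime P hP).mul_le.1 hTP
    · exact hL P hP hLP
    · obtain ⟨P', hP', hle⟩ := (hprime P hP).prod_le.1 hprod
      obtain ⟨hP's, hxP'⟩ := Finset.mem_filter.1 hP'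
      exact hxP' (hanti.eq hP's hP hle ▸ hxP)
  obtain ⟨l, hlT, hl⟩ : ∃ l ∈ T, ∀ P ∈ s, x ∈ P → l ∉ P := by
    by_contra! hcover
    have hsub : (T : Set R) ⊆
        ⋃ P ∈ (({P ∈ s | x ∈ P} : Finset (Ideal R)) : Set (Ideal R)), (P : Set R) :=
      fun l hl => by simpa [and_assoc] using hcover l hl
    obtain ⟨P, hP, hTP⟩ := (Ideal.subset_union_prime (f := id) ⊥ ⊥ fun P hP _ _ =>
      hprime P (Finset.mem_filter.1 hP).1).1 hsub
    exact not_T_le P (Finset.mem_filter.1 hP).1 (Finset.mem_filter.1 hP).2 hTP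
  refine ⟨l, Ideal.mul_le_left hlT, fun P hP hxl => ?_⟩
  by_cases hxP : x ∈ P
  · exact hl P hP hxP ((P.add_mem_iff_right hxP).1 hxl)
  · exact hxP ((P.add_mem_iff_left (T_le P hP hxP hlT)).1 hxl)

theorem exists_mem_forall_add_notMem {L : Ideal R} {s : Set (Ideal R)} (hs : s.Finite) (x : R)
    (hprime : ∀ P ∈ s, P.IsPrime) (hL : ∀ P ∈ s, ¬ L ≤ P) :
    ∃ l ∈ L, ∀ P ∈ s, x + l ∉ P := by
  let t : Set (Ideal R) := {P | Maximal (· ∈ s) P}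
  have hts : t ⊆ s := fun P hP => hP.prop
  have ht : t.Finite := hs.subset hts
  obtain ⟨l, hl, havoid⟩ := exists_mem_forall_add_notMem_of_antichain (L := L) (s := ht.toFinset) x
    (fun P hP => hprime P (hts (ht.mem_toFinset.1 hP)))
    (fun P hP => hL P (hts (ht.mem_toFinset.1 hP)))
    (by simpa using setOfPred_maximal_antichain (· ∈ s))
  refine ⟨l, hl, fun P hP hxl => ?_⟩
  obtain ⟨P', hle, hP'⟩ := hs.exists_le_maximal hP
  exact havoid P' (ht.mem_toFinset.2 hP') (hle hxl)

theorem exists_isSMulRegular_add [IsNoetherianRing R] {M : Type*} [AddCommGroup M] [Module R M]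
    [Module.Finite R M] {L : Ideal R} {r : R} (hrL : r ∈ L) (hr : IsSMulRegular M r) (x : R) :
    ∃ l ∈ L, IsSMulRegular M (x + l) := by
  have regular_iff (t : R) : IsSMulRegular M t ↔ ∀ P ∈ associatedPrimes R M, t ∉ P := by
    have := Set.ext_iff.1 (biUnion_associatedPrimes_eq_compl_regular R M) t
    simp only [Set.mem_iUnion, Set.mem_compl_iff, Set.mem_ofPred_eq, SetLike.mem_coe] at this
    simpa using (not_congr this).symm
  simp only [regular_iff] at hr ⊢
  exact exists_mem_forall_add_notMem (associatedPrimes.finite R M) x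
    (fun P hP => hP.isPrime) fun P hP hLP => hr P hP (hLP hrL)

end CosetAvoidance

section RegularSequences

universe u

theorem subsingleton_ext_quotSMulTop {R : Type u} [CommRing R] {N M : ModuleCat.{u} R} {x : R}
    (hx : IsSMulRegular M x) {i : ℕ} (hi : Subsingleton (Ext N M i))
    (hi' : Subsingleton (Ext N M (i + 1))) :
    Subsingleton (Ext N (ModuleCat.of R (QuotSMulTop x M)) i) :=
  AddCommGrpCat.subsingleton_of_isZero <|
    (Ext.covariant_sequence_exact₃' N hx.smulShortComplex_shortExact i (i + 1)
      rfl).isZero_of_both_zeros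
      ((AddCommGrpCat.isZero_of_iff_subsingleton.2 hi).eq_zero_of_src _)
      ((AddCommGrpCat.isZero_of_iff_subsingleton.2 hi').eq_zero_of_tgt _)

theorem exists_isWeaklyRegular_sub_mem_annihilator {R : Type u} [CommRing R] [IsNoetherianRing R]
    (N M : ModuleCat.{u} R) [Module.Finite R N] [Module.Finite R M] (as : List R)
    (hext : ∀ i < as.length, Subsingleton (Ext N M i)) :
    ∃ xs : List R, List.Forall₂ (fun a x => x - a ∈ annihilator R N) as xs ∧
      IsWeaklyRegular M xs := by
  induction as generalizing M with
  | nil => exact ⟨[], .nil, .nil R M⟩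
  | cons a as ih =>
    have hom_zero : Subsingleton (N →ₗ[R] M) :=
      (Ext.addEquiv₀.trans ModuleCat.homAddEquiv).symm.subsingleton_congr.2 (hext 0 (by simp))
    obtain ⟨r, hrN, hr⟩ := IsSMulRegular.subsingleton_linearMap_iff.1 hom_zero
    obtain ⟨l, hl, hal⟩ := exists_isSMulRegular_add hrN hr a
    obtain ⟨xs, hxs, hreg⟩ := ih (ModuleCat.of R (QuotSMulTop (a + l) M)) fun i hi =>
      subsingleton_ext_quotSMulTop hal (hext i (Nat.lt_succ_of_lt hi))
        (hext (i + 1) (Nat.succ_lt_succ hi))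
    exact ⟨(a + l) :: xs, .cons (by simpa using hl) hxs,
      (isWeaklyRegular_cons_iff _ _ _).2 ⟨hal, hreg⟩⟩

theorem exists_isWeaklyRegular_sub_mem_mul {R : Type u} [CommRing R] [IsNoetherianRing R]
    {I N : Ideal R} (hIN : I ≤ N) {rs as : List R} (hrs : IsRegular R rs) (hrsI : ∀ r ∈ rs, r ∈ I)
    (hlen : as.length = rs.length) :
    ∃ xs : List R, List.Forall₂ (fun a x => x - a ∈ N * I) as xs ∧ IsWeaklyRegular R xs := by
  have hsupp : support R (ModuleCat.of R (R ⧸ N * I)) ⊆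
      PrimeSpectrum.zeroLocus (Ideal.ofList rs) := by
    rw [support_eq_zeroLocus, Ideal.annihilator_quotient]
    intro P hP
    exact (Ideal.span_le.2 hrsI).trans ((P.2.mul_le.1 hP).elim hIN.trans id)
  have hext := ModuleCat.subsingleton_ext_of_exists_isRegular (Ideal.ofList rs)
    (ModuleCat.of R (R ⧸ N * I)) hsupp (ModuleCat.of R R) hrs.top_ne_smul.symm.lt_top rs
    (fun r hr => Ideal.subset_span hr) hrs
  simpa [Ideal.annihilator_quotient] using exists_isWeaklyRegular_sub_mem_annihilator
    (ModuleCat.of R (R ⧸ N * I)) (ModuleCat.of R R) as (hlen ▸ hext)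

theorem isWeaklyRegular_of_flat {R M : Type*} [CommRing R] [AddCommGroup M] [Module R M]
    [Flat R M] {rs : List R} (h : IsWeaklyRegular R rs) : IsWeaklyRegular M rs :=
  ((TensorProduct.rid R M).isWeaklyRegular_congr rs).1 (h.isWeaklyRegular_lTensor)

theorem isWeaklyRegular_triple_iff {R M : Type*} [CommRing R] [AddCommGroup M] [Module R M]
    {x y z : R} : IsWeaklyRegular M [x, y, z] ↔
      (∀ m : M, x • m = 0 → m = 0) ∧
      (∀ m p : M, y • m = x • p → ∃ s, m = x • s) ∧
      ∀ m p q : M, z • m = x • p + y • q → ∃ s t, m = x • s + y • t := by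
  rw [isWeaklyRegular_iff_Fin]
  simp [isSMulRegular_quotient_iff_mem_of_smul_mem, Fin.forall_fin_succ, Submodule.sup_smul,
    Submodule.ideal_span_singleton_smul, Submodule.mem_sup,
    Submodule.mem_smul_pointwise_iff_exists, eq_comm]

end RegularSequences

section KoszulCycles

variable {R M : Type*} [CommRing R] [AddCommGroup M] [Module R M] {x y z : R}

theorem exists_eq_koszul_boundary (h : IsWeaklyRegular M [x, y, z]) {r s t : M}
    (hcycle : x • r - y • s + z • t = 0) :
    ∃ α β γ : M, r = y • γ - z • β ∧ s = x • γ - z • α ∧ t = x • β - y • α := by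
  obtain ⟨hx, hy, hz⟩ := isWeaklyRegular_triple_iff.1 h
  obtain ⟨β, α, ht⟩ := hz t (-r) s (by linear_combination (norm := module) hcycle)
  obtain ⟨γ, hs⟩ := hy (s - z • α) (r + z • β) (by
    linear_combination (norm := module) (-1 : R) • hcycle + z • ht)
  refine ⟨-α, β, γ, ?_, by linear_combination (norm := module) hs,
    by linear_combination (norm := module) ht⟩
  rw [← sub_eq_zero]
  exact hx _ (by linear_combination (norm := module) hcycle + y • hs - z • ht)

end KoszulCycles

section Lifting

variable {R : Type*} [CommRing R] {M N P S T : Type*} [AddCommGroup M] [Module R M]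
  [AddCommGroup N] [Module R N] [AddCommGroup P] [Module R P] [AddCommGroup S] [Module R S]
  [AddCommGroup T] [Module R T]

theorem exists_comp_eq_of_range_le_s3 [Projective R M] (f : M →ₗ[R] P) (g : S →ₗ[R] P)
    (h : LinearMap.range f ≤ LinearMap.range g) : ∃ l : M →ₗ[R] S, g ∘ₗ l = f := by
  obtain ⟨l, hl⟩ := projective_lifting_property g.rangeRestrict
    (f.codRestrict (LinearMap.range g) fun m => h ⟨m, rfl⟩) g.surjective_rangeRestrict
  exact ⟨l, LinearMap.ext fun m => congrArg Subtype.val (LinearMap.congr_fun hl m)⟩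

theorem exists_bilin_lift_of_exact [Projective R M] [Projective R N] {g : S →ₗ[R] P}
    {h : P →ₗ[R] T} (hgh : Function.Exact g h) (B : M →ₗ[R] N →ₗ[R] P)
    (hB : ∀ m n, h (B m n) = 0) : ∃ L : M →ₗ[R] N →ₗ[R] S, ∀ m n, g (L m n) = B m n := by
  have hker : h ∘ₗ TensorProduct.lift B = 0 := TensorProduct.ext' fun m n => by simp [hB]
  obtain ⟨l, hl⟩ := exists_comp_eq_of_range_le_s3 (TensorProduct.lift B) g <| by
    rw [← hgh.linearMap_ker_eq]
    exact LinearMap.range_le_ker_iff.2 hker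
  exact ⟨TensorProduct.curry l, fun m n => by simpa using LinearMap.congr_fun hl (m ⊗ₜ n)⟩

end Lifting

section SmulTop

variable {R M P : Type*} [CommRing R] [AddCommGroup M] [Module R M] [AddCommGroup P] [Module R P]
  {N : Ideal R}

theorem apply_mem_of_mem_smul_top_s3 (f : M →ₗ[R] R) {m : M} (hm : m ∈ N • (⊤ : Submodule R M)) :
    f m ∈ N := by
  simpa using Submodule.smul_top_le_comap_smul_top N f hm

theorem map_mem_smul_top_s3 (f : M →ₗ[R] P) {m : M} (hm : m ∈ N • (⊤ : Submodule R M)) :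
    f m ∈ N • (⊤ : Submodule R P) :=
  Submodule.smul_top_le_comap_smul_top N f hm

theorem mk_mem_smul_top {m : M} {q : P} (hm : m ∈ N • (⊤ : Submodule R M))
    (hq : q ∈ N • (⊤ : Submodule R P)) : (m, q) ∈ N • (⊤ : Submodule R (M × P)) := by
  simpa using add_mem (map_mem_smul_top_s3 (LinearMap.inl R M P) hm)
    (map_mem_smul_top_s3 (LinearMap.inr R M P) hq)

theorem dual_mem_smul_top [Free R M] [Module.Finite R M] {θ : Dual R M} (hθ : ∀ m, θ m ∈ N) :
    θ ∈ N • (⊤ : Submodule R (Dual R M)) := by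
  rw [← (Free.chooseBasis R M).sum_dual_apply_smul_coord θ]
  exact Submodule.sum_mem _ fun i _ => Submodule.smul_mem_smul (hθ _) trivial

end SmulTop

section Isotropic

variable {k V W : Type*} [Field k] [AddCommGroup V] [Module k V] [AddCommGroup W] [Module k W]

/-- The composition of the bilinear map `φ` with any functional satisfies the three-term Plücker
relation; for alternating `φ` this says that all these compositions have rank at most two. -/
def SatisfiesPluecker (φ : V →ₗ[k] V →ₗ[k] W) : Prop :=
  ∀ (ξ : Dual k W) (a b c d : V),
    ξ (φ a b) * ξ (φ c d) - ξ (φ a c) * ξ (φ b d) + ξ (φ a d) * ξ (φ b c) = 0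

theorem exists_isotropic_submodule [FiniteDimensional k V] {φ : V →ₗ[k] V →ₗ[k] W}
    (hφ : SatisfiesPluecker φ) :
    ∃ U : Submodule k V, finrank k V ≤ finrank k U + 2 ∧ ∀ c ∈ U, ∀ d ∈ U, φ c d = 0 := by
  by_cases hzero : φ = 0
  · exact ⟨⊤, by simp, by simp [hzero]⟩
  obtain ⟨a, b, hab⟩ : ∃ a b, φ a b ≠ 0 := by
    contrapose! hzero
    exact LinearMap.ext₂ hzero
  obtain ⟨ξ, hξ⟩ := Projective.exists_dual_ne_zero k hab
  refine ⟨LinearMap.ker ((ξ ∘ₗ φ a).prod (ξ ∘ₗ φ b)), ?_, fun c hc d hd => ?_⟩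
  · have hrange := ((ξ ∘ₗ φ a).prod (ξ ∘ₗ φ b)).range.finrank_le
    have hsum := ((ξ ∘ₗ φ a).prod (ξ ∘ₗ φ b)).finrank_range_add_finrank_ker
    simp only [finrank_prod, finrank_self] at hrange
    omega
  · obtain ⟨hac, hbc⟩ : ξ (φ a c) = 0 ∧ ξ (φ b c) = 0 := by simpa using hc
    obtain ⟨had, hbd⟩ : ξ (φ a d) = 0 ∧ ξ (φ b d) = 0 := by simpa using hd
    have hcd : ξ (φ c d) = 0 := by simpa [hac, had, hξ] using hφ ξ a b c d
    refine (forall_dual_apply_eq_zero_iff k _).1 fun η => ?_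
    -- Polarising the relation for `η` by `ξ` isolates the term `ξ (φ a b) * η (φ c d)`.
    have hpolar := hφ (ξ + η) a b c d
    simp only [LinearMap.add_apply, hac, hbc, had, hbd, hcd] at hpolar
    refine (mul_eq_zero_iff_left hξ).1 ?_
    linear_combination hpolar - hφ η a b c d

theorem exists_linearIndependent_isotropic [FiniteDimensional k V] {φ : V →ₗ[k] V →ₗ[k] W}
    (hφ : SatisfiesPluecker φ) {n : ℕ} (hn : n + 2 ≤ finrank k V) :
    ∃ v : Fin n → V, LinearIndependent k v ∧ ∀ i j, φ (v i) (v j) = 0 := by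
  obtain ⟨U, hU, hUzero⟩ := exists_isotropic_submodule hφ
  obtain ⟨v, hv⟩ := exists_linearIndependent_of_le_finrank (show n ≤ finrank k U by omega)
  exact ⟨U.subtype ∘ v, hv.map' U.subtype U.ker_subtype, fun i j => hUzero _ (v i).2 _ (v j).2⟩

theorem exists_dual_apply_eq_of_linearIndependent {ι : Type*} {v : ι → V}
    (hv : LinearIndependent k v) (w : ι → k) : ∃ ξ : Dual k V, ∀ i, ξ (v i) = w i := by
  obtain ⟨g, hg⟩ := (Finsupp.linearCombination k v).exists_leftInverse_of_injective
    (LinearMap.ker_eq_bot.2 hv)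
  refine ⟨Finsupp.linearCombination k w ∘ₗ g, fun i => ?_⟩
  simpa using congrArg (Finsupp.linearCombination k w)
    (LinearMap.congr_fun hg (Finsupp.single i 1))

end Isotropic

section ResidueField

open IsLocalRing

variable {Q F : Type*} [CommRing Q] [IsLocalRing Q] [AddCommGroup F] [Module Q F]

theorem one_tmul_eq_zero_iff {f : F} :
    (1 : ResidueField Q) ⊗ₜ[Q] f = 0 ↔ f ∈ maximalIdeal Q • (⊤ : Submodule Q F) := by
  rw [← Submodule.Quotient.mk_eq_zero, ← TensorProduct.quotTensorEquivQuotSMul_mk_one_tmul]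
  exact (TensorProduct.quotTensorEquivQuotSMul F (maximalIdeal Q)).map_eq_zero_iff.symm

theorem one_tmul_eq_one_tmul_iff {f g : F} :
    (1 : ResidueField Q) ⊗ₜ[Q] f = 1 ⊗ₜ g ↔ f - g ∈ maximalIdeal Q • (⊤ : Submodule Q F) := by
  rw [← one_tmul_eq_zero_iff, TensorProduct.tmul_sub, sub_eq_zero]

theorem exists_one_tmul_eq (v : ResidueField Q ⊗[Q] F) : ∃ f : F, 1 ⊗ₜ f = v :=
  TensorProduct.mk_surjective Q F (ResidueField Q) residue_surjective v

theorem exists_dual_residue_eq [Projective Q F]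
    (ξ : Dual (ResidueField Q) (ResidueField Q ⊗[Q] F)) :
    ∃ ζ : Dual Q F, ∀ f, residue Q (ζ f) = ξ (1 ⊗ₜ f) := by
  obtain ⟨ζ, hζ⟩ := projective_lifting_property (Algebra.linearMap Q (ResidueField Q))
    (ξ.restrictScalars Q ∘ₗ TensorProduct.mk Q (ResidueField Q) F 1) residue_surjective
  exact ⟨ζ, LinearMap.congr_fun hζ⟩

end ResidueField

section EvalTriple

open IsLocalRing

variable {Q F : Type*} [CommRing Q] [AddCommGroup F] [Module Q F]

/-- Evaluation of functionals at three given vectors. -/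
def evalTriple (a b c : F) : Dual Q F →ₗ[Q] Q × Q × Q :=
  (Dual.eval Q F a).prod ((Dual.eval Q F b).prod (Dual.eval Q F c))

theorem mem_ker_evalTriple {a b c : F} {η : Dual Q F} :
    η ∈ LinearMap.ker (evalTriple a b c) ↔ η a = 0 ∧ η b = 0 ∧ η c = 0 := by
  simp [evalTriple]

theorem surjective_evalTriple [IsLocalRing Q] [Projective Q F] {a b c : F}
    (hli : LinearIndependent (ResidueField Q) ![(1 : ResidueField Q) ⊗ₜ[Q] a, 1 ⊗ₜ b, 1 ⊗ₜ c]) :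
    Function.Surjective (evalTriple (Q := Q) a b c) := by
  rw [← LinearMap.range_eq_top, ← top_le_iff]
  refine Submodule.le_of_le_smul_of_le_jacobson_bot (I := maximalIdeal Q) Module.Finite.fg_top
    (maximalIdeal_le_jacobson _) ?_
  rintro ⟨r, s, t⟩ -
  obtain ⟨ξ, hξ⟩ := exists_dual_apply_eq_of_linearIndependent hli
    ![residue Q r, residue Q s, residue Q t]
  obtain ⟨ζ, hζ⟩ := exists_dual_residue_eq ξ
  obtain ⟨hr, hs, ht⟩ :
      r - ζ a ∈ maximalIdeal Q ∧ s - ζ b ∈ maximalIdeal Q ∧ t - ζ c ∈ maximalIdeal Q := by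
    simp only [← residue_eq_zero_iff, map_sub, hζ, sub_eq_zero]
    exact ⟨(hξ 0).symm, (hξ 1).symm, (hξ 2).symm⟩
  rw [← add_sub_cancel (evalTriple a b c ζ) (r, s, t)]
  refine Submodule.add_mem_sup ⟨ζ, rfl⟩ ?_
  have mem_smul_top {r : Q} (hr : r ∈ maximalIdeal Q) :
      r ∈ maximalIdeal Q • (⊤ : Submodule Q Q) := by simpa using hr
  exact mk_mem_smul_top (mem_smul_top hr) (mk_mem_smul_top (mem_smul_top hs) (mem_smul_top ht))

end EvalTriple

section Bivectors

variable {R M : Type*} [CommRing R] [AddCommGroup M] [Module R M]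

theorem exists_mem_apply_self_eq_mul {N : Ideal R} {x : R} {t u : M →ₗ[R] M →ₗ[R] R}
    (hdiag : ∀ m, ∃ r, t m m = x * r) (hsymm : t + t.flip = x • u) {m : M}
    (hm : m ∈ N • (⊤ : Submodule R M)) :
    ∃ r ∈ N, t m m = x * r := by
  induction hm using Submodule.smul_induction_on' with
  | smul s hs m _ =>
    obtain ⟨r, hr⟩ := hdiag m
    exact ⟨s * (s * r), N.mul_mem_right _ hs, by
      simp only [map_smul, LinearMap.smul_apply, smul_eq_mul, hr]; ring⟩
  | add m hm m' _ ihm ihm' =>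
    obtain ⟨⟨r, hr, hmr⟩, r', hr', hmr'⟩ := And.intro ihm ihm'
    have hu : u m m' ∈ N := apply_mem_of_mem_smul_top_s3 (u.flip m') hm
    have hmm' : t m m' + t m' m = x * u m m' := LinearMap.congr_fun₂ hsymm m m'
    refine ⟨r + r' + u m m', add_mem (add_mem hr hr') hu, ?_⟩
    simp only [map_add, LinearMap.add_apply]
    linear_combination hmr + hmr' + hmm'

/-- The bivector `u ∧ v`, encoded as the skew-symmetric map `θ ↦ θ(u) v - θ(v) u`. -/
def wedge (u v : M) : Dual R M →ₗ[R] M :=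
  (Dual.eval R M u).smulRight v - (Dual.eval R M v).smulRight u

theorem wedge_apply (u v : M) (θ : Dual R M) : wedge u v θ = θ u • v - θ v • u := rfl

theorem exists_mem_apply_apply_eq_mul [Free R M] [Module.Finite R M] {N : Ideal R} {x y z : R}
    (hreg : IsWeaklyRegular R [x, y, z]) {u v : M} {S T : Dual R M →ₗ[R] M}
    (hST : wedge u v = x • S + y • T) {θ : Dual R M}
    (hθ : θ ∈ N • (⊤ : Submodule R (Dual R M))) : ∃ r ∈ N, θ (T θ) = x * r := by
  have hform (θ η : Dual R M) : θ u * η v - θ v * η u = x * η (S θ) + y * η (T θ) := by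
    simpa [wedge_apply] using congrArg η (LinearMap.congr_fun hST θ)
  let s : Dual R M →ₗ[R] Dual R M →ₗ[R] R := Dual.eval R M ∘ₗ S
  let t : Dual R M →ₗ[R] Dual R M →ₗ[R] R := Dual.eval R M ∘ₗ T
  obtain ⟨-, hy, -⟩ := isWeaklyRegular_triple_iff.1 hreg
  obtain ⟨-, hy', -⟩ := isWeaklyRegular_triple_iff.1
    (isWeaklyRegular_of_flat (M := Dual R M →ₗ[R] Dual R M →ₗ[R] R) hreg)
  have hdiag (η : Dual R M) : ∃ r, t η η = x * r :=
    hy (t η η) (-s η η) (by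
      simp only [s, t, LinearMap.comp_apply, Dual.eval_apply, smul_eq_mul]
      linear_combination -hform η η)
  obtain ⟨w, hw⟩ := hy' (t + t.flip) (-(s + s.flip)) <| LinearMap.ext₂ fun θ η => by
    simp only [s, t, LinearMap.add_apply, LinearMap.neg_apply, LinearMap.smul_apply,
      LinearMap.flip_apply, LinearMap.comp_apply, Dual.eval_apply, smul_eq_mul]
    linear_combination -hform θ η - hform η θ
  exact exists_mem_apply_self_eq_mul hdiag hw hθ

end Bivectors

section Complexes

variable {Q F₁ F₂ F₃ : Type*} [CommRing Q] [AddCommGroup F₁] [Module Q F₁] [AddCommGroup F₂]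
  [Module Q F₂] [AddCommGroup F₃] [Module Q F₃]

/-- The complex `0 → F₃ → F₂ → F₁ → Q` is exact except at `Q`, so that it resolves
`Q ⧸ range d₁`. -/
structure IsResolution_s3 (d₁ : F₁ →ₗ[Q] Q) (d₂ : F₂ →ₗ[Q] F₁) (d₃ : F₃ →ₗ[Q] F₂) : Prop where
  exact₁ : Function.Exact d₂ d₁
  exact₂ : Function.Exact d₃ d₂
  injective : Function.Injective d₃

/-- The complex `0 → F₃ → F₂ → F₁ → Q` has zero differentials modulo `N`. For the maximal ideal of
a local ring this is minimality of the complex. -/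
structure VanishesModulo (N : Ideal Q) (d₁ : F₁ →ₗ[Q] Q) (d₂ : F₂ →ₗ[Q] F₁) (d₃ : F₃ →ₗ[Q] F₂) :
    Prop where
  range_d₁_le : LinearMap.range d₁ ≤ N
  range_d₂_le : LinearMap.range d₂ ≤ N • (⊤ : Submodule Q F₁)
  range_d₃_le : LinearMap.range d₃ ≤ N • (⊤ : Submodule Q F₂)

/-- Products `F₁ × F₁ → F₂` and `F₁ × F₂ → F₃` on a complex `0 → F₃ → F₂ → F₁ → Q` that satisfy
the Leibniz rule. Graded commutativity and associativity are not imposed. -/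
structure LeibnizProduct (d₁ : F₁ →ₗ[Q] Q) (d₂ : F₂ →ₗ[Q] F₁) (d₃ : F₃ →ₗ[Q] F₂) where
  mul₁₁ : F₁ →ₗ[Q] F₁ →ₗ[Q] F₂
  mul₁₂ : F₁ →ₗ[Q] F₂ →ₗ[Q] F₃
  d₂_mul₁₁ : ∀ a b, d₂ (mul₁₁ a b) = d₁ a • b - d₁ b • a
  d₃_mul₁₂ : ∀ a f, d₃ (mul₁₂ a f) = d₁ a • f - mul₁₁ a (d₂ f)

variable {d₁ : F₁ →ₗ[Q] Q} {d₂ : F₂ →ₗ[Q] F₁} {d₃ : F₃ →ₗ[Q] F₂}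

theorem IsResolution_s3.conj (h : IsResolution_s3 d₁ d₂ d₃) {G₁ G₂ G₃ : Type*} [AddCommGroup G₁]
    [Module Q G₁] [AddCommGroup G₂] [Module Q G₂] [AddCommGroup G₃] [Module Q G₃]
    (e₁ : F₁ ≃ₗ[Q] G₁) (e₂ : F₂ ≃ₗ[Q] G₂) (e₃ : F₃ ≃ₗ[Q] G₃) :
    IsResolution_s3 (d₁ ∘ₗ e₁.symm.toLinearMap) (e₁.toLinearMap ∘ₗ d₂ ∘ₗ e₂.symm.toLinearMap)
      (e₂.toLinearMap ∘ₗ d₃ ∘ₗ e₃.symm.toLinearMap) where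
  exact₁ := by
    rw [LinearEquiv.conj_exact_iff_exact, LinearEquiv.precomp_exact_iff_exact]
    exact h.exact₁
  exact₂ := by
    rw [LinearEquiv.postcomp_exact_iff_exact, LinearEquiv.conj_exact_iff_exact,
      LinearEquiv.precomp_exact_iff_exact]
    exact h.exact₂
  injective := e₂.injective.comp (h.injective.comp e₃.symm.injective)

theorem IsResolution_s3.nonempty_leibnizProduct [Projective Q F₁] [Projective Q F₂]
    (h : IsResolution_s3 d₁ d₂ d₃) : Nonempty (LeibnizProduct d₁ d₂ d₃) := by
  obtain ⟨mul₁₁, h₁₁⟩ := exists_bilin_lift_of_exact h.exact₁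
    (LinearMap.lsmul Q F₁ ∘ₗ d₁ - (LinearMap.lsmul Q F₁ ∘ₗ d₁).flip) fun a b => by
      simp [mul_comm]
  obtain ⟨mul₁₂, h₁₂⟩ := exists_bilin_lift_of_exact h.exact₂
    (LinearMap.lsmul Q F₂ ∘ₗ d₁ - mul₁₁.compl₂ d₂) fun a f => by
      simp [h₁₁, h.exact₁.apply_apply_eq_zero]
  exact ⟨mul₁₁, mul₁₂, by simpa using h₁₁, by simpa using h₁₂⟩

namespace LeibnizProduct

variable (p : LeibnizProduct d₁ d₂ d₃)

/-- The product `a(bc)` of three elements of `F₁`. -/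
def mul₁₁₁ (a b c : F₁) : F₃ := p.mul₁₂ a (p.mul₁₁ b c)

theorem d₃_mul₁₁₁ (a b c : F₁) : d₃ (p.mul₁₁₁ a b c) =
    d₁ a • p.mul₁₁ b c - d₁ b • p.mul₁₁ a c + d₁ c • p.mul₁₁ a b := by
  simp only [mul₁₁₁, p.d₃_mul₁₂, p.d₂_mul₁₁, map_sub, map_smul]
  module

include p in
theorem smul_eq_smul_of_comp_eq_zero (a : F₁) {η : Dual Q F₁} (hη : η ∘ₗ d₂ = 0) :
    d₁ a • η = η a • d₁ := by
  ext g
  have := LinearMap.congr_fun hη (p.mul₁₁ a g)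
  simp only [LinearMap.comp_apply, p.d₂_mul₁₁, map_sub, map_smul, smul_eq_mul,
    LinearMap.zero_apply] at this
  simp only [LinearMap.smul_apply, smul_eq_mul]
  linear_combination this

variable (h : IsResolution_s3 d₁ d₂ d₃)
include h

theorem mul₁₂_d₃ (a : F₁) (g : F₃) : p.mul₁₂ a (d₃ g) = d₁ a • g :=
  h.injective <| by simp [p.d₃_mul₁₂, h.exact₂.apply_apply_eq_zero]

theorem smul_mul₁₂_sub (a b : F₁) (f : F₂) :
    d₁ b • p.mul₁₂ a f - d₁ a • p.mul₁₂ b f = p.mul₁₁₁ a b (d₂ f) :=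
  h.injective <| by
    simp only [map_sub, map_smul, p.d₃_mul₁₂, p.d₃_mul₁₁₁, h.exact₁.apply_apply_eq_zero]
    module

theorem smul_mul₁₁₁_relation (a b c g : F₁) :
    d₁ c • p.mul₁₁₁ a b g - d₁ b • p.mul₁₁₁ a c g + d₁ a • p.mul₁₁₁ b c g =
      d₁ g • p.mul₁₁₁ a b c :=
  h.injective <| by
    simp only [map_add, map_sub, map_smul, p.d₃_mul₁₁₁]
    module

end LeibnizProduct

section Pluecker

variable [Free Q F₃] [Module.Finite Q F₃] (p : LeibnizProduct d₁ d₂ d₃) (h : IsResolution_s3 d₁ d₂ d₃)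
  {a b c : F₁} (hreg : IsWeaklyRegular Q [d₁ a, d₁ b, d₁ c])
include h hreg

namespace LeibnizProduct

theorem exists_wedge_mul₁₁₁_eq (d : F₁) : ∃ S T : Dual Q F₃ →ₗ[Q] F₃,
      wedge (p.mul₁₁₁ a b c) (p.mul₁₁₁ a b d) = d₁ a • S + d₁ b • T := by
  obtain ⟨-, -, hc⟩ := isWeaklyRegular_triple_iff.1
    (isWeaklyRegular_of_flat (M := Dual Q F₃ →ₗ[Q] F₃) hreg)
  refine hc _ (-wedge (p.mul₁₁₁ a b c) (p.mul₁₁₁ b c d)) (wedge (p.mul₁₁₁ a b c) (p.mul₁₁₁ a c d))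
    (LinearMap.ext fun θ => ?_)
  have hrel := p.smul_mul₁₁₁_relation h a b c d
  have hθ := congrArg θ hrel
  simp only [map_add, map_sub, map_smul, smul_eq_mul] at hθ
  simp only [LinearMap.add_apply, LinearMap.neg_apply, LinearMap.smul_apply, wedge_apply]
  linear_combination (norm := module) θ (p.mul₁₁₁ a b c) • hrel - hθ • p.mul₁₁₁ a b c

theorem pluecker_mem {N : Ideal Q} (d : F₁) {ξ : Dual Q F₂}
    (hξ : ξ ∘ₗ d₃ ∈ N • (⊤ : Submodule Q (Dual Q F₃))) :
    ξ (p.mul₁₁ a b) * ξ (p.mul₁₁ c d) - ξ (p.mul₁₁ a c) * ξ (p.mul₁₁ b d) +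
      ξ (p.mul₁₁ a d) * ξ (p.mul₁₁ b c) ∈ N := by
  set θ : Dual Q F₃ := ξ ∘ₗ d₃
  have hθ (u v w : F₁) : θ (p.mul₁₁₁ u v w) =
      d₁ u * ξ (p.mul₁₁ v w) - d₁ v * ξ (p.mul₁₁ u w) + d₁ w * ξ (p.mul₁₁ u v) := by
    simp [θ, p.d₃_mul₁₁₁]
  obtain ⟨S, T, hST⟩ := p.exists_wedge_mul₁₁₁_eq h hreg d
  obtain ⟨n, hn, hT⟩ := exists_mem_apply_apply_eq_mul hreg hST hξ
  let f : F₃ := ξ (p.mul₁₁ a b) • p.mul₁₁₁ a c d - ξ (p.mul₁₁ a c) • p.mul₁₁₁ a b d +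
    ξ (p.mul₁₁ a d) • p.mul₁₁₁ a b c
  let g : F₃ := ξ (p.mul₁₁ a b) • p.mul₁₁₁ b c d - ξ (p.mul₁₁ b c) • p.mul₁₁₁ a b d +
    ξ (p.mul₁₁ b d) • p.mul₁₁₁ a b c
  have hfg : d₁ b • (f - T θ) = d₁ a • (g + S θ) := by
    have hwedge := LinearMap.congr_fun hST θ
    simp only [wedge_apply, hθ, LinearMap.add_apply, LinearMap.smul_apply] at hwedge
    linear_combination (norm := module) hwedge -
      ξ (p.mul₁₁ a b) • p.smul_mul₁₁₁_relation h a b c d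
  obtain ⟨-, hb, -⟩ := isWeaklyRegular_triple_iff.1 (isWeaklyRegular_of_flat (M := F₃) hreg)
  obtain ⟨ha, -, -⟩ := isWeaklyRegular_triple_iff.1 hreg
  obtain ⟨f', hf'⟩ := hb _ _ hfg
  set π := ξ (p.mul₁₁ a b) * ξ (p.mul₁₁ c d) - ξ (p.mul₁₁ a c) * ξ (p.mul₁₁ b d) +
    ξ (p.mul₁₁ a d) * ξ (p.mul₁₁ b c)
  have hθf : θ f = d₁ a * π := by
    simp only [f, map_add, map_sub, map_smul, smul_eq_mul, hθ, π]
    ring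
  have hθf' : θ f - θ (T θ) = d₁ a * θ f' := by simpa using congrArg θ hf'
  have hπ : π - (θ f' + n) = 0 := ha _ (by
    rw [smul_eq_mul]; linear_combination hθf' - hθf + hT)
  rw [sub_eq_zero.1 hπ]
  exact add_mem (apply_mem_of_mem_smul_top_s3 (Dual.eval Q F₃ f') hξ) hn

end LeibnizProduct

end Pluecker

section LinkedComplex

namespace LeibnizProduct

variable (p : LeibnizProduct d₁ d₂ d₃) (a b c : F₁)

/-- First differential of the linked complex `0 → ker (evalTriple a b c) → F₂* → F₃* × Q³ → Q`.
Up to signs, the linked complex is the dual of the mapping cone of the comparison map from the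
Koszul complex on `d₁ a, d₁ b, d₁ c` to the given complex, with the identity of `Q` and the
evaluation `F₁* → Q³` cancelled; the latter is legitimate when the evaluation is surjective. -/
def linkedD₁ : Dual Q F₃ × Q × Q × Q →ₗ[Q] Q :=
  (Dual.eval Q F₃ (p.mul₁₁₁ a b c)).coprod
    ((-d₁ a • LinearMap.id).coprod ((d₁ b • LinearMap.id).coprod (-d₁ c • LinearMap.id)))

/-- Second differential of the linked complex. -/
def linkedD₂ : Dual Q F₂ →ₗ[Q] Dual Q F₃ × Q × Q × Q :=
  d₃.dualMap.prod ((Dual.eval Q F₂ (p.mul₁₁ b c)).prod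
    ((Dual.eval Q F₂ (p.mul₁₁ a c)).prod (Dual.eval Q F₂ (p.mul₁₁ a b))))

variable (d₂) in
/-- Third differential of the linked complex. -/
def linkedD₃ : LinearMap.ker (evalTriple (Q := Q) a b c) →ₗ[Q] Dual Q F₂ :=
  d₂.dualMap ∘ₗ Submodule.subtype _

theorem linkedD₁_apply (θ : Dual Q F₃) (r s t : Q) : p.linkedD₁ a b c (θ, r, s, t) =
    θ (p.mul₁₁₁ a b c) - (d₁ a * r - d₁ b * s + d₁ c * t) := by
  simp only [linkedD₁, LinearMap.coprod_apply, Dual.eval_apply, LinearMap.smul_apply,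
    LinearMap.id_apply, smul_eq_mul]
  ring

theorem linkedD₂_apply (ζ : Dual Q F₂) : p.linkedD₂ a b c ζ =
    (ζ ∘ₗ d₃, ζ (p.mul₁₁ b c), ζ (p.mul₁₁ a c), ζ (p.mul₁₁ a b)) :=
  rfl

theorem linkedD₃_apply (η : LinearMap.ker (evalTriple (Q := Q) a b c)) :
    linkedD₃ d₂ a b c η = η.1 ∘ₗ d₂ :=
  rfl

theorem linkedD₁_linkedD₂_apply (ζ : Dual Q F₂) : p.linkedD₁ a b c (p.linkedD₂ a b c ζ) = 0 := by
  simp [linkedD₁_apply, linkedD₂_apply, p.d₃_mul₁₁₁]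

variable {a b c} (hreg : IsWeaklyRegular Q [d₁ a, d₁ b, d₁ c])
include hreg

include p in
theorem linkedD₃_injective [Projective Q (Dual Q F₁)] : Function.Injective (linkedD₃ d₂ a b c) := by
  obtain ⟨ha, -, -⟩ := isWeaklyRegular_triple_iff.1
    (isWeaklyRegular_of_flat (M := Dual Q F₁) hreg)
  refine (injective_iff_map_eq_zero _).2 fun ⟨η, hη⟩ hd => Subtype.ext (ha η ?_)
  have hηd : η ∘ₗ d₂ = 0 := hd
  rw [p.smul_eq_smul_of_comp_eq_zero a hηd, (mem_ker_evalTriple.1 hη).1, zero_smul]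

theorem exists_apply_mul₁₁_eq_of_linkedD₂_eq_zero [Projective Q (Dual Q F₁)] {ζ : Dual Q F₂}
    (hζ : p.linkedD₂ a b c ζ = 0) : ∃ η : Dual Q F₁, ∀ g, ζ (p.mul₁₁ a g) = d₁ a * η g := by
  obtain ⟨-, hb, -⟩ := isWeaklyRegular_triple_iff.1
    (isWeaklyRegular_of_flat (M := Dual Q F₁) hreg)
  simp only [linkedD₂_apply, Prod.mk_eq_zero] at hζ
  obtain ⟨hζd, -, -, hab⟩ := hζ
  obtain ⟨η, hη⟩ := hb (ζ ∘ₗ p.mul₁₁ a) (ζ ∘ₗ p.mul₁₁ b) <| LinearMap.ext fun g => by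
    have := LinearMap.congr_fun hζd (p.mul₁₁₁ a b g)
    simp only [LinearMap.comp_apply, p.d₃_mul₁₁₁, map_add, map_sub, map_smul, hab, smul_eq_mul,
      LinearMap.zero_apply] at this
    simp only [LinearMap.smul_apply, LinearMap.comp_apply, smul_eq_mul]
    linear_combination -this
  exact ⟨η, fun g => LinearMap.congr_fun hη g⟩

variable (h : IsResolution_s3 d₁ d₂ d₃)
include h

theorem linkedD₂_linkedD₃_exact [Projective Q (Dual Q F₁)] :
    Function.Exact (linkedD₃ d₂ a b c) (p.linkedD₂ a b c) := by
  obtain ⟨ha, -, -⟩ := isWeaklyRegular_triple_iff.1 hreg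
  refine fun ζ => ⟨fun hζ => ?_, ?_⟩
  · obtain ⟨η, hη⟩ := p.exists_apply_mul₁₁_eq_of_linkedD₂_eq_zero hreg hζ
    simp only [linkedD₂_apply, Prod.mk_eq_zero] at hζ
    obtain ⟨hζd, -, hac, hab⟩ := hζ
    have hηa : η a = 0 := ha _ <| by
      obtain ⟨g, hg⟩ := (h.exact₂ (p.mul₁₁ a a)).1 (by simp [p.d₂_mul₁₁])
      rw [smul_eq_mul, ← hη, ← hg]
      exact LinearMap.congr_fun hζd g
    have hηb : η b = 0 := ha _ ((hη b).symm.trans hab)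
    have hηc : η c = 0 := ha _ ((hη c).symm.trans hac)
    refine ⟨⟨η, mem_ker_evalTriple.2 ⟨hηa, hηb, hηc⟩⟩, LinearMap.ext fun f => ?_⟩
    have hf := LinearMap.congr_fun hζd (p.mul₁₂ a f)
    simp only [LinearMap.comp_apply, p.d₃_mul₁₂, map_sub, map_smul, hη, smul_eq_mul,
      LinearMap.zero_apply] at hf
    refine sub_eq_zero.1 (ha _ ?_)
    simp only [linkedD₃_apply, LinearMap.comp_apply, smul_eq_mul]
    linear_combination -hf
  · rintro ⟨⟨η, hη⟩, rfl⟩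
    obtain ⟨ha, hb, hc⟩ := mem_ker_evalTriple.1 hη
    simp only [linkedD₂_apply, linkedD₃_apply, Prod.mk_eq_zero]
    refine ⟨LinearMap.ext fun g => ?_, ?_, ?_, ?_⟩ <;>
      simp [p.d₂_mul₁₁, h.exact₂.apply_apply_eq_zero, ha, hb, hc]

theorem exists_comp_eq_of_linkedD₁_eq_zero [Projective Q (Dual Q F₁)] [Projective Q (Dual Q F₂)]
    {θ : Dual Q F₃} {r s t : Q} (hθ : p.linkedD₁ a b c (θ, r, s, t) = 0) :
    ∃ ζ : Dual Q F₂, ζ ∘ₗ d₃ = θ := by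
  rw [linkedD₁_apply] at hθ
  obtain ⟨ha, -, -⟩ := isWeaklyRegular_triple_iff.1 hreg
  obtain ⟨-, -, hc⟩ := isWeaklyRegular_triple_iff.1 (isWeaklyRegular_of_flat (M := Dual Q F₁) hreg)
  obtain ⟨-, hb, -⟩ := isWeaklyRegular_triple_iff.1 (isWeaklyRegular_of_flat (M := Dual Q F₂) hreg)
  have exists_coeffs : ∃ σ τ : Dual Q F₁, ∀ g,
      θ (p.mul₁₁₁ a b g) - t * d₁ g = d₁ a * σ g + d₁ b * τ g := by
    let prod (u v : F₁) : Dual Q F₁ := θ ∘ₗ p.mul₁₂ u ∘ₗ p.mul₁₁ v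
    obtain ⟨σ, τ, hστ⟩ := hc (prod a b - t • d₁) (-(prod b c - r • d₁)) (prod a c - s • d₁) <|
      LinearMap.ext fun g => by
        have hg := congrArg θ (p.smul_mul₁₁₁_relation h a b c g)
        simp only [map_add, map_sub, map_smul, smul_eq_mul, mul₁₁₁] at hg hθ
        simp only [prod, LinearMap.smul_apply, LinearMap.comp_apply, smul_eq_mul,
          LinearMap.add_apply, LinearMap.sub_apply, LinearMap.neg_apply]
        linear_combination hg + d₁ g * hθ
    exact ⟨σ, τ, fun g => LinearMap.congr_fun hστ g⟩
  obtain ⟨σ, τ, hστ⟩ := exists_coeffs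
  obtain ⟨ζ, hζ⟩ := hb (θ ∘ₗ p.mul₁₂ a - τ ∘ₗ d₂) (θ ∘ₗ p.mul₁₂ b + σ ∘ₗ d₂) <|
    LinearMap.ext fun f => by
      have hf := congrArg θ (p.smul_mul₁₂_sub h a b f)
      have hστf := hστ (d₂ f)
      simp only [map_sub, map_smul, smul_eq_mul, h.exact₁.apply_apply_eq_zero] at hf hστf
      simp only [LinearMap.smul_apply, LinearMap.comp_apply, smul_eq_mul, LinearMap.add_apply,
        LinearMap.sub_apply]
      linear_combination hf + hστf
  refine ⟨ζ, LinearMap.ext fun g => sub_eq_zero.1 (ha _ ?_)⟩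
  have hg := LinearMap.congr_fun hζ (d₃ g)
  simp only [LinearMap.smul_apply, LinearMap.comp_apply, smul_eq_mul, LinearMap.sub_apply,
    p.mul₁₂_d₃ h, h.exact₂.apply_apply_eq_zero, map_smul, map_zero] at hg
  simp only [LinearMap.comp_apply, smul_eq_mul]
  linear_combination -hg

theorem linkedD₁_linkedD₂_exact [Projective Q (Dual Q F₁)] [Projective Q (Dual Q F₂)]
    (hsurj : Function.Surjective (evalTriple (Q := Q) a b c)) :
    Function.Exact (p.linkedD₂ a b c) (p.linkedD₁ a b c) := by
  rintro ⟨θ, r, s, t⟩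
  refine ⟨fun hθ => ?_, ?_⟩
  · obtain ⟨ζ, hζ⟩ := p.exists_comp_eq_of_linkedD₁_eq_zero hreg h hθ
    obtain ⟨α, β, γ, hr, hs, ht⟩ := exists_eq_koszul_boundary hreg
      (r := r - ζ (p.mul₁₁ b c)) (s := s - ζ (p.mul₁₁ a c)) (t := t - ζ (p.mul₁₁ a b)) <| by
        have hζψ := LinearMap.congr_fun hζ (p.mul₁₁₁ a b c)
        simp only [LinearMap.comp_apply, p.d₃_mul₁₁₁, map_add, map_sub, map_smul,
          smul_eq_mul] at hζψ
        rw [linkedD₁_apply] at hθ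
        simp only [smul_eq_mul]
        linear_combination -hζψ - hθ
    obtain ⟨η, hη⟩ := hsurj (α, β, γ)
    obtain ⟨hηa, hηb, hηc⟩ : η a = α ∧ η b = β ∧ η c = γ := by simpa [evalTriple] using hη
    refine ⟨ζ + η ∘ₗ d₂, ?_⟩
    have hcomp : (ζ + η ∘ₗ d₂) ∘ₗ d₃ = θ := by
      rw [← hζ]
      ext g
      simp [h.exact₂.apply_apply_eq_zero]
    simp only [linkedD₂_apply, hcomp, LinearMap.add_apply, LinearMap.comp_apply, p.d₂_mul₁₁,
      map_sub, map_smul, hηa, hηb, hηc, ← hr, ← hs, ← ht, add_sub_cancel]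
  · rintro ⟨ζ, hζ⟩
    rw [← hζ, p.linkedD₁_linkedD₂_apply]

theorem isResolution_linked [Projective Q (Dual Q F₁)] [Projective Q (Dual Q F₂)]
    (hsurj : Function.Surjective (evalTriple (Q := Q) a b c)) :
    IsResolution_s3 (F₃ := LinearMap.ker (evalTriple (Q := Q) a b c)) (p.linkedD₁ a b c)
      (p.linkedD₂ a b c) (linkedD₃ d₂ a b c) :=
  ⟨p.linkedD₁_linkedD₂_exact hreg h hsurj, p.linkedD₂_linkedD₃_exact hreg h,
    p.linkedD₃_injective hreg⟩

omit hreg h in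
theorem exists_dual_of_mem_colon [Projective Q F₁] {u : Q}
    (hu : u ∈ (Ideal.span {d₁ a, d₁ b, d₁ c}).colon (LinearMap.range d₁ : Set Q)) :
    ∃ ρ σ τ : Dual Q F₁, ∀ g, d₁ a * ρ g - d₁ b * σ g + d₁ c * τ g = u * d₁ g := by
  let κ : Q × Q × Q →ₗ[Q] Q := (d₁ a • LinearMap.id).coprod
    ((-d₁ b • LinearMap.id).coprod (d₁ c • LinearMap.id))
  obtain ⟨l, hl⟩ := exists_comp_eq_of_range_le_s3 (u • d₁) κ <| by
    rintro _ ⟨g, rfl⟩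
    obtain ⟨r, s, t, hrst⟩ := Submodule.mem_span_triple.1
      (Submodule.mem_colon.1 hu (d₁ g) ⟨g, rfl⟩)
    refine ⟨(r, -s, t), ?_⟩
    simp only [smul_eq_mul] at hrst
    simp only [κ, LinearMap.coprod_apply, LinearMap.smul_apply, LinearMap.id_apply, smul_eq_mul,
      ← hrst]
    ring
  refine ⟨LinearMap.fst Q Q _ ∘ₗ l, LinearMap.fst Q Q Q ∘ₗ LinearMap.snd Q Q _ ∘ₗ l,
    LinearMap.snd Q Q Q ∘ₗ LinearMap.snd Q Q _ ∘ₗ l, fun g => ?_⟩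
  have hg := LinearMap.congr_fun hl g
  simp only [κ, LinearMap.comp_apply, LinearMap.coprod_apply, LinearMap.smul_apply,
    LinearMap.id_apply, smul_eq_mul] at hg
  simp only [LinearMap.comp_apply, LinearMap.fst_apply, LinearMap.snd_apply]
  linear_combination hg

omit p in
theorem exists_dual_lift [Projective Q (Dual Q F₂)] [Projective Q (Dual Q F₃)] {u : Q}
    {ρ σ τ : Dual Q F₁}
    (hu : ∀ g, d₁ a * ρ g - d₁ b * σ g + d₁ c * τ g = u * d₁ g) :
    ∃ (α β γ : Dual Q F₂) (θ : Dual Q F₃),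
      (∀ f, ρ (d₂ f) = d₁ b * γ f - d₁ c * β f) ∧ (∀ f, τ (d₂ f) = d₁ a * β f - d₁ b * α f) ∧
      ∀ g, α (d₃ g) = d₁ a * θ g := by
  obtain ⟨α, β, γ, hρ, -, hτ⟩ := exists_eq_koszul_boundary
    (isWeaklyRegular_of_flat (M := Dual Q F₂) hreg)
    (r := ρ ∘ₗ d₂) (s := σ ∘ₗ d₂) (t := τ ∘ₗ d₂) <| LinearMap.ext fun f => by
      simpa [h.exact₁.apply_apply_eq_zero] using hu (d₂ f)
  obtain ⟨-, hb, -⟩ := isWeaklyRegular_triple_iff.1 (isWeaklyRegular_of_flat (M := Dual Q F₃) hreg)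
  obtain ⟨θ, hθ⟩ := hb (α ∘ₗ d₃) (β ∘ₗ d₃) <| LinearMap.ext fun g => by
    have := LinearMap.congr_fun hτ (d₃ g)
    simp only [LinearMap.comp_apply, LinearMap.sub_apply, LinearMap.smul_apply,
      h.exact₂.apply_apply_eq_zero, map_zero] at this
    exact (sub_eq_zero.1 this.symm).symm
  exact ⟨α, β, γ, θ, LinearMap.congr_fun hρ, LinearMap.congr_fun hτ, LinearMap.congr_fun hθ⟩

omit h in
theorem exists_apply_mul₁₁₁_eq {α β : Dual Q F₂} {τ : Dual Q F₁} {θ : Dual Q F₃}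
    (hτ : ∀ f, τ (d₂ f) = d₁ a * β f - d₁ b * α f) (hθ : ∀ g, α (d₃ g) = d₁ a * θ g) :
    ∃ μ, θ (p.mul₁₁₁ a b c) =
      α (p.mul₁₁ b c) + τ c - β (p.mul₁₁ a c) + d₁ c * μ := by
  obtain ⟨ha, hb, -⟩ := isWeaklyRegular_triple_iff.1 hreg
  have hτab := hτ (p.mul₁₁ a b)
  have hτac := hτ (p.mul₁₁ a c)
  have hψ := hθ (p.mul₁₁₁ a b c)
  simp only [p.d₂_mul₁₁, p.d₃_mul₁₁₁, map_add, map_sub, map_smul, smul_eq_mul] at hτab hτac hψ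
  obtain ⟨μ, hμ⟩ := hb (α (p.mul₁₁ a b) - τ a) (β (p.mul₁₁ a b) - τ b) (by
    simp only [smul_eq_mul]; linear_combination hτab)
  refine ⟨μ, sub_eq_zero.1 (ha _ ?_)⟩
  simp only [smul_eq_mul] at hμ ⊢
  linear_combination -hψ + d₁ c * hμ - hτac

omit h in
theorem apply_mul₁₁₁_add_mem {u : Q} {α β γ : Dual Q F₂} {ρ σ τ : Dual Q F₁} {θ : Dual Q F₃}
    (hu : ∀ g, d₁ a * ρ g - d₁ b * σ g + d₁ c * τ g = u * d₁ g)
    (hρ : ∀ f, ρ (d₂ f) = d₁ b * γ f - d₁ c * β f) (hτ : ∀ f, τ (d₂ f) = d₁ a * β f - d₁ b * α f)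
    (hθ : ∀ g, α (d₃ g) = d₁ a * θ g) :
    θ (p.mul₁₁₁ a b c) + u ∈ Ideal.span {d₁ a, d₁ b, d₁ c} := by
  obtain ⟨-, hb, hc⟩ := isWeaklyRegular_triple_iff.1 hreg
  simp only [smul_eq_mul] at hb hc
  have hρac := hρ (p.mul₁₁ a c)
  have hτbc := hτ (p.mul₁₁ b c)
  simp only [p.d₂_mul₁₁, map_sub, map_smul, smul_eq_mul] at hρac hτbc
  obtain ⟨α', β', γ', hρa, -, -⟩ := exists_eq_koszul_boundary hreg
    (r := ρ a - u) (s := σ a) (t := τ a) (by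
      simp only [smul_eq_mul]; linear_combination hu a)
  obtain ⟨s, t, hτb⟩ := hc (τ b) (-ρ b) (σ b + u) (by linear_combination hu b)
  obtain ⟨ν, hν⟩ := hb (α (p.mul₁₁ b c) + τ c - d₁ c * t) (β (p.mul₁₁ b c) + d₁ c * s) (by
    linear_combination hτbc + d₁ c * hτb)
  obtain ⟨s', t', hβ⟩ := hc (β (p.mul₁₁ a c) - ρ a) (-ρ c) (γ (p.mul₁₁ a c)) (by
    linear_combination hρac)
  obtain ⟨μ, hμ⟩ := p.exists_apply_mul₁₁₁_eq hreg hτ hθ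
  simp only [smul_eq_mul] at hρa
  refine Submodule.mem_span_triple.2 ⟨ν - s', -(t' + γ'), β' + t + μ, ?_⟩
  simp only [smul_eq_mul]
  linear_combination -hμ - hν + hβ + hρa

theorem range_linkedD₁ [Projective Q F₁] [Projective Q (Dual Q F₂)] [Projective Q (Dual Q F₃)] :
    LinearMap.range (p.linkedD₁ a b c) =
      (Ideal.span {d₁ a, d₁ b, d₁ c}).colon (LinearMap.range d₁ : Set Q) := by
  have hspan : Ideal.span {d₁ a, d₁ b, d₁ c} ≤ LinearMap.range (p.linkedD₁ a b c) := by
    rw [Ideal.span_le]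
    rintro _ (rfl | rfl | rfl)
    · exact ⟨(0, -1, 0, 0), by simp [linkedD₁_apply]⟩
    · exact ⟨(0, 0, 1, 0), by simp [linkedD₁_apply]⟩
    · exact ⟨(0, 0, 0, -1), by simp [linkedD₁_apply]⟩
  refine le_antisymm ?_ fun u hu => ?_
  · rintro _ ⟨⟨θ, r, s, t⟩, rfl⟩
    refine Submodule.mem_colon.2 ?_
    rintro _ ⟨g, rfl⟩
    have hg := congrArg θ (p.smul_mul₁₁₁_relation h a b c g)
    simp only [map_add, map_sub, map_smul, smul_eq_mul] at hg
    refine Submodule.mem_span_triple.2 ⟨θ (p.mul₁₁₁ b c g) - r * d₁ g,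
      -(θ (p.mul₁₁₁ a c g) - s * d₁ g), θ (p.mul₁₁₁ a b g) - t * d₁ g, ?_⟩
    simp only [linkedD₁_apply, smul_eq_mul]
    linear_combination hg
  · obtain ⟨ρ, σ, τ, hρστ⟩ := exists_dual_of_mem_colon hu
    obtain ⟨α, β, γ, θ, hρ, hτ, hθ⟩ := exists_dual_lift hreg h hρστ
    have hθu := hspan (p.apply_mul₁₁₁_add_mem hreg hρστ hρ hτ hθ)
    have hψ : θ (p.mul₁₁₁ a b c) ∈ LinearMap.range (p.linkedD₁ a b c) :=
      ⟨(θ, 0, 0, 0), by simp [linkedD₁_apply]⟩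
    exact (Submodule.add_mem_iff_right _ hψ).1 hθu

end LeibnizProduct

theorem LeibnizProduct.vanishesModulo_linked [Free Q F₂] [Module.Finite Q F₂] [Free Q F₃]
    [Module.Finite Q F₃] {N : Ideal Q} (p : LeibnizProduct d₁ d₂ d₃)
    (h : VanishesModulo N d₁ d₂ d₃) {a b c : F₁}
    (hbc : p.mul₁₁ b c ∈ N • (⊤ : Submodule Q F₂)) (hac : p.mul₁₁ a c ∈ N • (⊤ : Submodule Q F₂))
    (hab : p.mul₁₁ a b ∈ N • (⊤ : Submodule Q F₂)) :
    VanishesModulo (F₃ := LinearMap.ker (evalTriple (Q := Q) a b c)) N (p.linkedD₁ a b c)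
      (p.linkedD₂ a b c) (linkedD₃ d₂ a b c) where
  range_d₁_le := by
    rintro _ ⟨⟨θ, r, s, t⟩, rfl⟩
    have hψ : θ (p.mul₁₁₁ a b c) ∈ N :=
      apply_mem_of_mem_smul_top_s3 θ (map_mem_smul_top_s3 (p.mul₁₂ a) hbc)
    have hd₁ (g : F₁) (r : Q) : d₁ g * r ∈ N := N.mul_mem_right r (h.range_d₁_le ⟨g, rfl⟩)
    rw [linkedD₁_apply]
    exact sub_mem hψ (add_mem (sub_mem (hd₁ a r) (hd₁ b s)) (hd₁ c t))
  range_d₂_le := by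
    rintro _ ⟨ζ, rfl⟩
    have hζ {f : F₂} (hf : f ∈ N • (⊤ : Submodule Q F₂)) : ζ f ∈ N • (⊤ : Submodule Q Q) :=
      map_mem_smul_top_s3 ζ hf
    have hζd₃ : ζ ∘ₗ d₃ ∈ N • (⊤ : Submodule Q (Dual Q F₃)) :=
      dual_mem_smul_top fun g => apply_mem_of_mem_smul_top_s3 ζ (h.range_d₃_le ⟨g, rfl⟩)
    exact mk_mem_smul_top hζd₃ (mk_mem_smul_top (hζ hbc) (mk_mem_smul_top (hζ hac) (hζ hab)))
  range_d₃_le := by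
    rintro _ ⟨η, rfl⟩
    exact dual_mem_smul_top fun f => apply_mem_of_mem_smul_top_s3 η.1 (h.range_d₂_le ⟨f, rfl⟩)

end LinkedComplex

section ChoiceOfTriple

open IsLocalRing

theorem exists_sub_mem_smul_top_apply_eq {N : Ideal Q} (a : F₁) {x : Q}
    (hx : x - d₁ a ∈ N * LinearMap.range d₁) :
    ∃ a' : F₁, a' - a ∈ N • (⊤ : Submodule Q F₁) ∧ d₁ a' = x := by
  rw [← smul_eq_mul, ← Submodule.map_top, ← Submodule.map_smul''] at hx
  obtain ⟨v, hv, hvx⟩ := hx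
  exact ⟨a + v, by simpa using hv, by simp [hvx]⟩

theorem exists_isWeaklyRegular_sub_mem_smul_top [IsNoetherianRing Q] {N : Ideal Q}
    (hN : LinearMap.range d₁ ≤ N) {x y z : Q} (hreg : IsRegular Q [x, y, z])
    (hx : x ∈ LinearMap.range d₁) (hy : y ∈ LinearMap.range d₁) (hz : z ∈ LinearMap.range d₁)
    (a b c : F₁) :
    ∃ a' b' c' : F₁, a' - a ∈ N • (⊤ : Submodule Q F₁) ∧ b' - b ∈ N • (⊤ : Submodule Q F₁) ∧
      c' - c ∈ N • (⊤ : Submodule Q F₁) ∧ IsWeaklyRegular Q [d₁ a', d₁ b', d₁ c'] := by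
  obtain ⟨xs, hxs, hxsreg⟩ := exists_isWeaklyRegular_sub_mem_mul hN hreg
    (as := [d₁ a, d₁ b, d₁ c]) (by simp [-LinearMap.mem_range, hx, hy, hz]) rfl
  match xs, hxs with
  | [x', y', z'], .cons ha (.cons hb (.cons hc .nil)) =>
    obtain ⟨a', haa', rfl⟩ := exists_sub_mem_smul_top_apply_eq a ha
    obtain ⟨b', hbb', rfl⟩ := exists_sub_mem_smul_top_apply_eq b hb
    obtain ⟨c', hcc', rfl⟩ := exists_sub_mem_smul_top_apply_eq c hc
    exact ⟨a', b', c', haa', hbb', hcc', hxsreg⟩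

variable [IsNoetherianRing Q] [IsLocalRing Q] [Projective Q F₂] [Free Q F₃] [Module.Finite Q F₃]
  (p : LeibnizProduct d₁ d₂ d₃) (h : IsResolution_s3 d₁ d₂ d₃)
  (hd₁ : LinearMap.range d₁ ≤ maximalIdeal Q)
  (hd₃ : LinearMap.range d₃ ≤ maximalIdeal Q • (⊤ : Submodule Q F₂))
  {x y z : Q} (hreg : IsRegular Q [x, y, z]) (hx : x ∈ LinearMap.range d₁)
  (hy : y ∈ LinearMap.range d₁) (hz : z ∈ LinearMap.range d₁)
include h hd₁ hd₃ hreg hx hy hz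

namespace LeibnizProduct

theorem satisfiesPluecker_baseChange_mul₁₁ :
    SatisfiesPluecker (LinearMap.BilinMap.baseChange (ResidueField Q) p.mul₁₁) := by
  intro ξ a b c d
  obtain ⟨a, rfl⟩ := exists_one_tmul_eq a
  obtain ⟨b, rfl⟩ := exists_one_tmul_eq b
  obtain ⟨c, rfl⟩ := exists_one_tmul_eq c
  obtain ⟨d, rfl⟩ := exists_one_tmul_eq d
  obtain ⟨ζ, hζ⟩ := exists_dual_residue_eq ξ
  obtain ⟨a', b', c', ha, hb, hc, hreg'⟩ :=
    exists_isWeaklyRegular_sub_mem_smul_top hd₁ hreg hx hy hz a b c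
  rw [← one_tmul_eq_one_tmul_iff] at ha hb hc
  have hpluecker := p.pluecker_mem h hreg' d (N := maximalIdeal Q) (ξ := ζ) <|
    dual_mem_smul_top fun g => apply_mem_of_mem_smul_top_s3 ζ (hd₃ ⟨g, rfl⟩)
  rw [← residue_eq_zero_iff] at hpluecker
  simpa only [← ha, ← hb, ← hc, LinearMap.BilinMap.baseChange_tmul, mul_one, ← hζ, map_add,
    map_sub, map_mul] using hpluecker

theorem exists_isWeaklyRegular_surjective_evalTriple [Free Q F₁] [Module.Finite Q F₁]
    (hrank : 5 ≤ finrank Q F₁) :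
    ∃ a b c : F₁, IsWeaklyRegular Q [d₁ a, d₁ b, d₁ c] ∧
      Function.Surjective (evalTriple (Q := Q) a b c) ∧
      p.mul₁₁ b c ∈ maximalIdeal Q • (⊤ : Submodule Q F₂) ∧
      p.mul₁₁ a c ∈ maximalIdeal Q • (⊤ : Submodule Q F₂) ∧
      p.mul₁₁ a b ∈ maximalIdeal Q • (⊤ : Submodule Q F₂) := by
  obtain ⟨v, hv, hzero⟩ := exists_linearIndependent_isotropic (n := 3)
    (p.satisfiesPluecker_baseChange_mul₁₁ h hd₁ hd₃ hreg hx hy hz) (by rwa [finrank_baseChange])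
  choose f hf using fun i => exists_one_tmul_eq (v i)
  obtain ⟨a, b, c, ha, hb, hc, hreg'⟩ :=
    exists_isWeaklyRegular_sub_mem_smul_top hd₁ hreg hx hy hz (f 0) (f 1) (f 2)
  rw [← one_tmul_eq_one_tmul_iff, hf] at ha hb hc
  have hvabc : v = ![1 ⊗ₜ a, 1 ⊗ₜ b, 1 ⊗ₜ c] := by
    ext i
    fin_cases i <;> simp [ha, hb, hc]
  have hprod {s t : F₁} {i j : Fin 3} (hs : 1 ⊗ₜ s = v i) (ht : 1 ⊗ₜ t = v j) :
      p.mul₁₁ s t ∈ maximalIdeal Q • (⊤ : Submodule Q F₂) := by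
    rw [← one_tmul_eq_zero_iff]
    simpa [← hs, ← ht] using hzero i j
  exact ⟨a, b, c, hreg', surjective_evalTriple (hvabc ▸ hv), hprod hb hc, hprod ha hc, hprod ha hb⟩

end LeibnizProduct

end ChoiceOfTriple

section Format

open IsLocalRing

variable [IsLocalRing Q] [Free Q F₁] [Module.Finite Q F₁] [Free Q F₂] [Module.Finite Q F₂]

theorem free_ker_of_surjective_s3
    {f : F₁ →ₗ[Q] F₂} (hf : Function.Surjective f) :
    Free Q (LinearMap.ker f) ∧ Module.Finite Q (LinearMap.ker f) ∧
      finrank Q (LinearMap.ker f) + finrank Q F₂ = finrank Q F₁ := by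
  obtain ⟨s, hs⟩ := projective_lifting_property f LinearMap.id hf
  obtain ⟨e, -, -⟩ := f.exact_subtype_ker_map.splitSurjectiveEquiv
    (Submodule.subtype_injective _) ⟨s, hs⟩
  have hfinite : Module.Finite Q (LinearMap.ker f) :=
    .of_surjective (LinearMap.fst Q _ _ ∘ₗ e.toLinearMap) (Prod.fst_surjective.comp e.surjective)
  have hprojective : Projective Q (LinearMap.ker f) :=
    .of_split (e.symm.toLinearMap ∘ₗ LinearMap.inl Q _ _) (LinearMap.fst Q _ _ ∘ₗ e.toLinearMap) <|
      LinearMap.ext fun v => by simp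
  have hfree : Free Q (LinearMap.ker f) := free_of_flat_of_isLocalRing
  exact ⟨hfree, hfinite, by rw [e.finrank_eq, finrank_prod]⟩

variable [Free Q F₃] [Module.Finite Q F₃]

theorem IsResolution_s3.hasResolutionFormat (h : IsResolution_s3 d₁ d₂ d₃)
    (hmin : VanishesModulo (maximalIdeal Q) d₁ d₂ d₃) {m n : ℕ} (h₁ : finrank Q F₁ = m)
    (h₂ : finrank Q F₂ = m + n - 1) (h₃ : finrank Q F₃ = n) :
    HasResolutionFormat (LinearMap.range d₁) m n := by
  let e₁ : F₁ ≃ₗ[Q] (Fin m → Q) := .ofFinrankEq _ _ (by simp [h₁])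
  let e₂ : F₂ ≃ₗ[Q] (Fin (m + n - 1) → Q) := .ofFinrankEq _ _ (by simp [h₂])
  let e₃ : F₃ ≃ₗ[Q] (Fin n → Q) := .ofFinrankEq _ _ (by simp [h₃])
  have hconj := h.conj e₁ e₂ e₃
  refine ⟨_, _, _, LinearMap.range_comp_of_range_eq_top _ e₁.symm.range,
    hconj.exact₁.linearMap_ker_eq.symm, hconj.exact₂.linearMap_ker_eq.symm,
    LinearMap.ker_eq_bot.2 hconj.injective, hmin.range_d₁_le, ?_, ?_⟩
  · rintro _ ⟨v, rfl⟩
    exact map_mem_smul_top_s3 e₁.toLinearMap (hmin.range_d₂_le ⟨_, rfl⟩)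
  · rintro _ ⟨v, rfl⟩
    exact map_mem_smul_top_s3 e₂.toLinearMap (hmin.range_d₃_le ⟨_, rfl⟩)

theorem LeibnizProduct.hasResolutionFormat_linked (p : LeibnizProduct d₁ d₂ d₃)
    (h : IsResolution_s3 d₁ d₂ d₃) (hmin : VanishesModulo (maximalIdeal Q) d₁ d₂ d₃) {a b c : F₁}
    (hreg : IsWeaklyRegular Q [d₁ a, d₁ b, d₁ c])
    (hsurj : Function.Surjective (evalTriple (Q := Q) a b c))
    (hbc : p.mul₁₁ b c ∈ maximalIdeal Q • (⊤ : Submodule Q F₂))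
    (hac : p.mul₁₁ a c ∈ maximalIdeal Q • (⊤ : Submodule Q F₂))
    (hab : p.mul₁₁ a b ∈ maximalIdeal Q • (⊤ : Submodule Q F₂))
    (hrank : finrank Q F₂ + 1 = finrank Q F₁ + finrank Q F₃) :
    HasResolutionFormat ((Ideal.span {d₁ a, d₁ b, d₁ c}).colon (LinearMap.range d₁ : Set Q))
      (finrank Q F₃ + 3) (finrank Q F₁ - 3) := by
  obtain ⟨_, _, hker⟩ := free_ker_of_surjective_s3 hsurj
  simp only [finrank_prod, finrank_self, finrank_linearMap, mul_one] at hker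
  rw [← p.range_linkedD₁ hreg h]
  refine (p.isResolution_linked hreg h hsurj).hasResolutionFormat
    (p.vanishesModulo_linked hmin hbc hac hab) ?_ ?_ ?_
  · simp [finrank_linearMap]
  · rw [finrank_linearMap, finrank_self]
    omega
  · omega

end Format

end Complexes

/-- **Proposition 1.2(b).** Let `Q` be a commutative Noetherian local ring and `I ⊆ Q` a
grade `3` perfect ideal of resolution format `(1, m, m+n-1, n)`.  If `m ≥ 5`, then there
exists a grade `3` perfect ideal of resolution format `(1, n+3, m+n-1, m-3)` that is
directly linked to `I`. -/
theorem stmt_3 (Q : Type*) [CommRing Q] [IsNoetherianRing Q] [IsLocalRing Q]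
    (I : Ideal Q) (m n : ℕ) (hI : IsGrade3PerfectOfFormat I m n) (hm : 5 ≤ m) :
    ∃ J : Ideal Q, IsGrade3PerfectOfFormat J (n + 3) (m - 3) ∧ DirectlyLinked I J := by
  obtain ⟨⟨x, y, z, hx, hy, hz, hxyz⟩, -, hn, d₁, d₂, d₃, rfl, h₁, h₂, h₃, hd₁, hd₂, hd₃⟩ := hI
  have hres : IsResolution_s3 d₁ d₂ d₃ :=
    ⟨LinearMap.exact_iff.2 h₁.symm, LinearMap.exact_iff.2 h₂.symm, LinearMap.ker_eq_bot.1 h₃⟩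
  obtain ⟨p⟩ := hres.nonempty_leibnizProduct
  obtain ⟨a, b, c, hreg, hsurj, hbc, hac, hab⟩ :=
    p.exists_isWeaklyRegular_surjective_evalTriple hres hd₁ hd₃ hxyz hx hy hz (by simpa using hm)
  have habc : IsRegular Q [d₁ a, d₁ b, d₁ c] :=
    (IsLocalRing.isRegular_iff_isWeaklyRegular_of_subset_maximalIdeal <| by
      simpa using ⟨hd₁ ⟨a, rfl⟩, hd₁ ⟨b, rfl⟩, hd₁ ⟨c, rfl⟩⟩).2 hreg
  have hspan : Ideal.span {d₁ a, d₁ b, d₁ c} ≤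
      (Ideal.span {d₁ a, d₁ b, d₁ c}).colon (LinearMap.range d₁ : Set Q) := Ideal.le_colon
  have hformat := p.hasResolutionFormat_linked hres ⟨hd₁, hd₂, hd₃⟩ hreg hsurj hbc hac hab
    (by simp only [finrank_fin_fun]; omega)
  exact ⟨_, ⟨⟨_, _, _, hspan (Ideal.subset_span (by simp)), hspan (Ideal.subset_span (by simp)),
    hspan (Ideal.subset_span (by simp)), habc⟩, by omega, by omega, by simpa using hformat⟩,
    _, _, _, ⟨a, rfl⟩, ⟨b, rfl⟩, ⟨c, rfl⟩, habc, rfl⟩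
end
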